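/- A discrete group G is C*-simple if and only if G has no amenable recurrent subgroup that is either a finite normal subgroup of G or a normalish subgroup of G. -/

import Mathlib

noncomputable section
open scoped ENNReal ComplexOrder lp
open MeasureTheory
set_option maxHeartbeats 1000000
set_option synthInstance.maxHeartbeats 1000000

universe u

variable {G : Type u} [Group G]

theorem translat_mem (g : G) (f : ℓ²(G, ℂ)) : Memℓp (fun h => f (g⁻¹ * h)) 2 := by
  have hf : Summable fun i : G => ‖f i‖ ^ (2 : ℝ≥0∞).toReal :=
    (memℓp_gen_iff (by norm_num)).1 (lp.memℓp f)
  exact memℓp_gen ((Equiv.mulLeft g⁻¹).summable_iff.2 hf)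

/-- The left regular representation of `g ∈ G` as a linear isometric bijection of `ℓ²(G)`,
given by `(λ_g ξ)(h) = ξ(g⁻¹ h)`. -/
def lregE (g : G) : ℓ²(G, ℂ) ≃ₗᵢ[ℂ] ℓ²(G, ℂ) :=
{ toFun := fun f => ⟨fun h => f (g⁻¹ * h), translat_mem g f⟩
  invFun := fun f => ⟨fun h => f (g * h), by
    have := translat_mem g⁻¹ f; simpa using! this⟩
  map_add' := by intro f₁ f₂; ext h; simp [lp.coeFn_add]; rfl
  map_smul' := by intro c f; ext h; simp [lp.coeFn_smul]
  left_inv := by intro f; ext h; simp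
  right_inv := by intro f; ext h; simp
  norm_map' := by
    intro f
    rw [lp.norm_eq_tsum_rpow (by norm_num) f, lp.norm_eq_tsum_rpow (by norm_num)]
    congr 1
    exact (Equiv.mulLeft g⁻¹).tsum_eq (fun h => ‖f h‖ ^ (2 : ℝ≥0∞).toReal) }

/-- The left regular representation `λ` as bounded operators on `ℓ²(G)`. -/
def lreg (g : G) : ℓ²(G, ℂ) →L[ℂ] ℓ²(G, ℂ) :=
  (lregE g).toContinuousLinearEquiv.toContinuousLinearMap

variable (G) in
/-- The reduced group C*-algebra `C*_λ(G)`: the norm-closed star subalgebra of the algebra of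
bounded operators on `ℓ²(G)` generated by the image of the left regular representation. -/
def redCstar : StarSubalgebra ℂ (ℓ²(G, ℂ) →L[ℂ] ℓ²(G, ℂ)) :=
  (StarAlgebra.adjoin ℂ (Set.range (lreg (G := G)))).topologicalClosure

variable (G) in
/-- `G` is C*-simple: `C*_λ(G)` has no closed two-sided ideals other than `{0}` and the
whole algebra. -/
def IsCstarSimple : Prop :=
  ∀ I : TwoSidedIdeal (redCstar G), IsClosed (I : Set (redCstar G)) → I = ⊥ ∨ I = ⊤

attribute [irreducible] redCstar lreg lregE

variable (G) in
/-- The Chabauty topology on the space of subgroups of `G`: the topology induced from the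
product topology on `{0,1}^G` by identifying a subgroup with its indicator function. -/
def chabauty : TopologicalSpace (Subgroup G) :=
  letI : ∀ p : Prop, Decidable p := Classical.propDecidable
  TopologicalSpace.induced (fun (H : Subgroup G) (g : G) => decide (g ∈ H))
    (inferInstance : TopologicalSpace (G → Bool))

attribute [instance] chabauty

/-- The conjugate subgroup `gHg⁻¹`. -/
def conjSub (g : G) (H : Subgroup G) : Subgroup G :=
  H.map (MulAut.conj g).toMonoidHom

/-- `H` is a recurrent subgroup of `G`: the trivial subgroup does not belong to the Chabauty
closure of the set of conjugates of `H`. -/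
def IsRecurrent (H : Subgroup G) : Prop :=
  (⊥ : Subgroup G) ∉ closure {K : Subgroup G | ∃ g : G, K = conjSub g H}

/-- Left translation of a bounded function on a group `H`. -/
def translInfty {H : Type*} [Group H] (h : H) (f : lp (fun _ : H => ℝ) ∞) :
    lp (fun _ : H => ℝ) ∞ :=
  ⟨fun k => f (h⁻¹ * k), by
    apply memℓp_infty
    have : (Set.range fun k => ‖f (h⁻¹ * k)‖) = Set.range fun k => ‖f k‖ :=
      (Equiv.mulLeft h⁻¹).surjective.range_comp (fun k => ‖f k‖)
    rw [this]
    exact memℓp_infty_iff.1 (lp.memℓp f)⟩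

/-- A group `H` is amenable: there exists a left-invariant mean on `ℓ∞(H)`, i.e. a unital
positive linear functional invariant under left translation. -/
def IsAmenable (H : Type*) [Group H] : Prop :=
  ∃ m : lp (fun _ : H => ℝ) ∞ →ₗ[ℝ] ℝ,
    m 1 = 1 ∧ (∀ f : lp (fun _ : H => ℝ) ∞, (∀ k, 0 ≤ f k) → 0 ≤ m f) ∧
      ∀ (h : H) (f : lp (fun _ : H => ℝ) ∞), m (translInfty h f) = m f

/-- `H` is a normalish subgroup of `G`: every finite intersection of conjugates of `H`
is infinite. -/
def IsNormalish (H : Subgroup G) : Prop :=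
  ∀ (n : ℕ) (g : Fin n → G), ((⨅ i : Fin n, conjSub (g i) H) : Set G).Infinite

set_option linter.all false


/-! ### States as a compact convex set of functions -/

/-- The set of positive unital functionals, as a subset of a product of lines. -/
def StSet (V : Type*) [AddCommGroup V] [Module ℝ V] (P : Set V) (e : V) : Set (V → ℝ) :=
  {m | (∀ a b, m (a + b) = m a + m b) ∧ (∀ (c : ℝ) a, m (c • a) = c * m a) ∧
    (∀ a ∈ P, 0 ≤ m a) ∧ m e = 1}

section StSet
variable {V : Type*} [AddCommGroup V] [Module ℝ V] {P : Set V} {e : V}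

theorem StSet.sub {m : V → ℝ} (hm : m ∈ StSet V P e) (a b : V) : m (a - b) = m a - m b := by
  have := hm.1 (a - b) b
  rw [sub_add_cancel] at this
  linarith

theorem isClosed_StSet : IsClosed (StSet V P e) := by
  have : StSet V P e = (⋂ a, ⋂ b, {m : V → ℝ | m (a + b) = m a + m b}) ∩
      ((⋂ c : ℝ, ⋂ a, {m : V → ℝ | m (c • a) = c * m a}) ∩
      ((⋂ a ∈ P, {m : V → ℝ | 0 ≤ m a}) ∩ {m : V → ℝ | m e = 1})) := by
    ext m; simp [StSet]
  rw [this]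
  refine IsClosed.inter (isClosed_iInter fun a => isClosed_iInter fun b =>
    isClosed_eq (by fun_prop) (by fun_prop)) (IsClosed.inter (isClosed_iInter fun c =>
    isClosed_iInter fun b => isClosed_eq (by fun_prop) (by fun_prop)) (IsClosed.inter
    (isClosed_iInter fun a => isClosed_iInter fun _ => isClosed_le (by fun_prop) (by fun_prop))
    (isClosed_eq (by fun_prop) (by fun_prop))))

theorem isCompact_StSet (h : ∀ v : V, ∃ c : ℝ, c • e - v ∈ P ∧ c • e + v ∈ P) :
    IsCompact (StSet V P e) := by
  choose c hc1 hc2 using h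
  refine IsCompact.of_isClosed_subset
    (isCompact_univ_pi (fun v => isCompact_Icc (a := -c v) (b := c v))) isClosed_StSet ?_
  intro m hm v _
  have h1 := hm.2.2.1 _ (hc1 v)
  have h2 := hm.2.2.1 _ (hc2 v)
  rw [StSet.sub hm, hm.2.1, hm.2.2.2] at h1
  rw [hm.1, hm.2.1, hm.2.2.2] at h2
  constructor <;> linarith

theorem convex_StSet : Convex ℝ (StSet V P e) := by
  intro m hm n hn a b ha hb hab
  refine ⟨fun x y => ?_, fun c x => ?_, fun x hx => ?_, ?_⟩
  · simp [hm.1, hn.1]; ring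
  · simp [hm.2.1, hn.2.1]; ring
  · have := hm.2.2.1 x hx
    have := hn.2.2.1 x hx
    simp only [Pi.add_apply, Pi.smul_apply, smul_eq_mul]
    positivity
  · simp [hm.2.2.2, hn.2.2.2, hab]

end StSet

/-- Bounded real functions on `G`. -/
abbrev BF (G : Type u) := lp (fun _ : G => ℝ) ∞

/-- Means on `G`. -/
def Mn (G : Type u) : Set (BF G → ℝ) := StSet (BF G) {f | ∀ k, 0 ≤ f k} 1

theorem translInfty_apply {H : Type*} [Group H] (h : H) (f : lp (fun _ : H => ℝ) ∞) (k : H) :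
    translInfty h f k = f (h⁻¹ * k) := rfl

theorem translInfty_mul (g h : G) (f : BF G) :
    translInfty (g * h) f = translInfty g (translInfty h f) := by
  ext k; simp [translInfty_apply, mul_assoc]

theorem translInfty_one (f : BF G) : translInfty (1 : G) f = f := by
  ext k; simp [translInfty_apply]

/-- Action on means. -/
def actM (g : G) (m : BF G → ℝ) : BF G → ℝ := fun f => m (translInfty g⁻¹ f)

theorem actM_mul (g h : G) (m : BF G → ℝ) : actM (g * h) m = actM g (actM h m) := by
  funext f; simp [actM, translInfty_mul]

theorem actM_one (m : BF G → ℝ) : actM (1 : G) m = m := by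
  funext f; simp [actM, translInfty_one]

theorem continuous_actM (g : G) : Continuous (actM g) := by
  unfold actM; fun_prop

theorem actM_comb (g : G) (a b : ℝ) (m n : BF G → ℝ) :
    actM g (a • m + b • n) = a • actM g m + b • actM g n := by
  funext f; simp [actM]

theorem actM_mem_Mn (g : G) {m : BF G → ℝ} (hm : m ∈ Mn G) : actM g m ∈ Mn G := by
  refine ⟨fun a b => ?_, fun c a => ?_, fun a ha => ?_, ?_⟩
  · simp only [actM]
    rw [← hm.1]; congr 1
  · simp only [actM]
    rw [← hm.2.1]; congr 1
  · exact hm.2.2.1 _ (fun k => ha _)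
  · simp only [actM]
    rw [← hm.2.2.2]; congr 1

theorem isCompact_Mn : IsCompact (Mn G) := by
  apply isCompact_StSet
  intro v
  refine ⟨‖v‖, fun k => ?_, fun k => ?_⟩
  · have := abs_le.1 (lp.norm_apply_le_norm (by simp) v k)
    change 0 ≤ ‖v‖ * (1 : ℝ) - v k
    linarith
  · have := abs_le.1 (lp.norm_apply_le_norm (by simp) v k)
    change 0 ≤ ‖v‖ * (1 : ℝ) + v k
    linarith

theorem nonempty_Mn : (Mn G).Nonempty :=
  ⟨fun f => f 1, fun a b => by simp [lp.coeFn_add], fun a b => by simp [lp.coeFn_smul],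
    fun a ha => ha 1, by simp⟩

/-- Minimal closed convex invariant sets of means. -/
structure MinK (K : Set (BF G → ℝ)) : Prop where
  sub : K ⊆ Mn G
  ne : K.Nonempty
  closed : IsClosed K
  conv : Convex ℝ K
  inv : ∀ g : G, ∀ m ∈ K, actM g m ∈ K
  min : ∀ K' ⊆ K, K'.Nonempty → IsClosed K' → Convex ℝ K' →
    (∀ g : G, ∀ m ∈ K', actM g m ∈ K') → K' = K

theorem MinK.compact {K : Set (BF G → ℝ)} (hK : MinK K) : IsCompact K :=
  isCompact_Mn.of_isClosed_subset hK.closed hK.sub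

variable (G) in
theorem exists_MinK : ∃ K : Set (BF G → ℝ), MinK K := by
  let S : Set (Set (BF G → ℝ)) := {K | K ⊆ Mn G ∧ K.Nonempty ∧ IsClosed K ∧ Convex ℝ K ∧
    ∀ g : G, ∀ m ∈ K, actM g m ∈ K}
  have h0 : Mn G ∈ S := ⟨subset_rfl, nonempty_Mn, isClosed_StSet, convex_StSet,
    fun g m hm => actM_mem_Mn g hm⟩
  obtain ⟨K, -, hK⟩ := zorn_superset_nonempty S (by
    intro c hc hch hne
    refine ⟨⋂₀ c, ⟨?_, ?_, ?_, ?_, ?_⟩, fun s hs => Set.sInter_subset_of_mem hs⟩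
    · obtain ⟨s, hs⟩ := hne
      exact (Set.sInter_subset_of_mem hs).trans (hc hs).1
    · refine @IsCompact.nonempty_sInter_of_directed_nonempty_isCompact_isClosed _ _ c
        hne.to_subtype ?_ ?_ ?_ ?_
      · intro a ha b hb
        rcases hch.total ha hb with h | h
        · exact ⟨a, ha, subset_rfl, h⟩
        · exact ⟨b, hb, h, subset_rfl⟩
      · exact fun s hs => (hc hs).2.1
      · exact fun s hs => isCompact_Mn.of_isClosed_subset (hc hs).2.2.1 (hc hs).1
      · exact fun s hs => (hc hs).2.2.1
    · exact isClosed_sInter fun s hs => (hc hs).2.2.1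
    · exact convex_sInter fun s hs => (hc hs).2.2.2.1
    · intro g m hm s hs
      exact (hc hs).2.2.2.2 g m (hm s hs)) _ h0
  refine ⟨K, hK.prop.1, hK.prop.2.1, hK.prop.2.2.1, hK.prop.2.2.2.1, hK.prop.2.2.2.2, ?_⟩
  intro K' hs h1 h2 h3 h4
  exact hK.eq_of_subset ⟨hs.trans hK.prop.1, h1, h2, h3, h4⟩ hs

/-- States on `C(X)`. -/
def StX (X : Type*) [TopologicalSpace X] : Set (C(X, ℝ) → ℝ) := StSet C(X, ℝ) {k | 0 ≤ k} 1

theorem isCompact_StX (X : Type*) [TopologicalSpace X] [CompactSpace X] : IsCompact (StX X) := by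
  apply isCompact_StSet
  intro v
  refine ⟨‖v‖, fun k => ?_, fun k => ?_⟩
  · have := abs_le.1 (v.norm_coe_le_norm k)
    simp
    linarith
  · have := abs_le.1 (v.norm_coe_le_norm k)
    simp
    linarith

theorem StX.mono {X : Type*} [TopologicalSpace X] {ν : C(X, ℝ) → ℝ} (hν : ν ∈ StX X)
    {a b : C(X, ℝ)} (h : ∀ x, a x ≤ b x) : ν a ≤ ν b := by
  have := hν.2.2.1 (b - a) (fun x => by simpa using h x)
  rw [StSet.sub hν] at this
  linarith

/-- Coordinate functions on a set of means. -/
def coordX (X : Set (BF G → ℝ)) (f : BF G) : C(X, ℝ) :=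
  ⟨fun x => x.1 f, (continuous_apply f).comp continuous_subtype_val⟩

/-- Barycenter. -/
def bary (X : Set (BF G → ℝ)) (ν : C(X, ℝ) → ℝ) : BF G → ℝ := fun f => ν (coordX X f)

theorem continuous_bary (X : Set (BF G → ℝ)) : Continuous (bary X) := by
  unfold bary; fun_prop

theorem StX.sum {X : Type*} [TopologicalSpace X] {ν : C(X, ℝ) → ℝ} (hν : ν ∈ StX X)
    {ι : Type*} (s : Finset ι) (a : ι → C(X, ℝ)) : ν (∑ i ∈ s, a i) = ∑ i ∈ s, ν (a i) := by
  classical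
  induction s using Finset.induction_on with
  | empty =>
    have := hν.2.1 0 0
    simpa using this
  | insert i s hi ih => rw [Finset.sum_insert hi, Finset.sum_insert hi, hν.1, ih]

theorem bary_mem {K X : Set (BF G → ℝ)} (hKc : IsCompact K) (hKcl : IsClosed K)
    (hKv : Convex ℝ K) (hX : X ⊆ K) {ν : C(X, ℝ) → ℝ} (hν : ν ∈ StX X) :
    bary X ν ∈ K := by
  classical
  rw [← hKcl.closure_eq, mem_closure_iff]
  intro o ho hbo
  obtain ⟨I, u, hu, hIo⟩ := isOpen_pi_iff.1 ho _ hbo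
  suffices h : ∃ κ ∈ K, ∀ f ∈ I, κ f = bary X ν f by
    obtain ⟨κ, hκ, h⟩ := h
    refine ⟨κ, hIo ?_, hκ⟩
    intro f hf
    rw [h f hf]
    exact (hu f hf).2
  let r : (BF G → ℝ) →ₗ[ℝ] (I → ℝ) :=
    { toFun := fun m f => m f.1, map_add' := fun _ _ => rfl, map_smul' := fun _ _ => rfl }
  have hr : Continuous r := by
    change Continuous fun (m : BF G → ℝ) (f : I) => m f.1
    fun_prop
  by_contra hcon
  have hnot : r (bary X ν) ∉ r '' K := by
    rintro ⟨κ, hκ, h⟩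
    exact hcon ⟨κ, hκ, fun f hf => congrFun h ⟨f, hf⟩⟩
  obtain ⟨l, c, hl1, hl2⟩ := geometric_hahn_banach_closed_point
    (hKv.linear_image r) (hKc.image hr).isClosed hnot
  have hl : ∀ v : I → ℝ, l v = ∑ i, l (Pi.single i 1) * v i := by
    intro v
    have := LinearMap.pi_apply_eq_sum_univ (l : (I → ℝ) →ₗ[ℝ] ℝ) v
    simp only [ContinuousLinearMap.coe_coe, smul_eq_mul] at this
    rw [this]
    refine Finset.sum_congr rfl fun i _ => ?_
    rw [mul_comm]
    congr 2
    funext j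
    simp [Pi.single_apply, eq_comm]
  have h1 : ν (∑ i : I, l (Pi.single i 1) • coordX X i.1) = l (r (bary X ν)) := by
    rw [StX.sum hν, hl]
    refine Finset.sum_congr rfl fun i _ => ?_
    rw [hν.2.1]; rfl
  have h2 : ν (∑ i : I, l (Pi.single i 1) • coordX X i.1) ≤ ν (c • 1) := by
    apply StX.mono hν
    intro x
    have h3 := (hl1 (r x.1) ⟨x.1, hX x.2, rfl⟩).le
    rw [hl] at h3
    have h4 : (∑ i : I, l (Pi.single i 1) • coordX X i.1) x
        = ∑ i : I, l (Pi.single i 1) * (r x.1) i := by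
      rw [ContinuousMap.sum_apply]; rfl
    rw [h4]
    simpa using h3
  rw [hν.2.1, hν.2.2.2, h1] at h2
  linarith


/-- Pull back of states by a function: the state `k ↦ ν (p k) / ν p`. -/
def cutState {X : Type*} [TopologicalSpace X] (ν : C(X, ℝ) → ℝ) (p : C(X, ℝ)) : C(X, ℝ) → ℝ :=
  fun k => (ν p)⁻¹ * ν (p * k)

theorem cutState_mem {X : Type*} [TopologicalSpace X] {ν : C(X, ℝ) → ℝ} (hν : ν ∈ StX X)
    {p : C(X, ℝ)} (hp : 0 ≤ p) (h : 0 < ν p) : cutState ν p ∈ StX X := by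
  refine ⟨fun a b => ?_, fun c a => ?_, fun a ha => ?_, ?_⟩
  · simp only [cutState]; rw [mul_add, hν.1]; ring
  · simp only [cutState]; rw [mul_smul_comm, hν.2.1]; ring
  · exact mul_nonneg (inv_nonneg.2 h.le) (hν.2.2.1 _ (mul_nonneg hp ha))
  · simp only [cutState, mul_one]; exact inv_mul_cancel₀ h.ne'

theorem coord_bound (X : Set (BF G → ℝ)) (hX : X ⊆ Mn G) (f : BF G) (x : X) :
    |coordX X f x| ≤ ‖f‖ := by
  have hx := hX x.2
  have h1 := hx.2.2.1 (‖f‖ • 1 - f) (fun k => by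
    have := abs_le.1 (lp.norm_apply_le_norm (by simp) f k)
    change 0 ≤ ‖f‖ * (1 : ℝ) - f k
    linarith)
  have h2 := hx.2.2.1 (‖f‖ • 1 + f) (fun k => by
    have := abs_le.1 (lp.norm_apply_le_norm (by simp) f k)
    change 0 ≤ ‖f‖ * (1 : ℝ) + f k
    linarith)
  rw [StSet.sub hx, hx.2.1, hx.2.2.2] at h1
  rw [hx.1, hx.2.1, hx.2.2.2] at h2
  change |x.1 f| ≤ _
  rw [abs_le]
  constructor <;> linarith

theorem cut_zero {X : Type*} [TopologicalSpace X] {ν : C(X, ℝ) → ℝ} (hν : ν ∈ StX X)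
    {p a : C(X, ℝ)} (hp : 0 ≤ p) (h : ν p = 0) (C : ℝ) (ha : ∀ x, |a x| ≤ C) :
    ν (p * a) = 0 := by
  have h1 : ν (p * a) ≤ ν (C • p) := StX.mono hν fun x => by
    have := (abs_le.1 (ha x)).2
    have h3 : 0 ≤ p x := hp x
    simp only [ContinuousMap.mul_apply, ContinuousMap.smul_apply, smul_eq_mul]
    nlinarith
  have h2 : ν ((-C) • p) ≤ ν (p * a) := StX.mono hν fun x => by
    have := (abs_le.1 (ha x)).1
    have h3 : 0 ≤ p x := hp x
    simp only [ContinuousMap.mul_apply, ContinuousMap.smul_apply, smul_eq_mul]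
    nlinarith
  rw [hν.2.1, h] at h1 h2
  linarith

/-- Bauer: at an extreme point, the representing state is multiplicative on coordinates. -/
theorem bauer1 {K X : Set (BF G → ℝ)} (hKc : IsCompact K) (hKcl : IsClosed K)
    (hKv : Convex ℝ K) (hX : X ⊆ K) (hKM : K ⊆ Mn G) {ν : C(X, ℝ) → ℝ} (hν : ν ∈ StX X)
    {w : BF G → ℝ} (hw : w ∈ Set.extremePoints ℝ K) (hb : bary X ν = w)
    {p : C(X, ℝ)} (hp : 0 ≤ p) (hp1 : p ≤ 1) (f : BF G) :
    ν (p * coordX X f) = ν p * w f := by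
  have hb' : ∀ f, ν (coordX X f) = w f := fun f => congrFun hb f
  have hq : 0 ≤ 1 - p := sub_nonneg.2 hp1
  have hνq : ν (1 - p) = 1 - ν p := by rw [StSet.sub hν, hν.2.2.2]
  have hqf : ∀ f, ν ((1 - p) * coordX X f) = w f - ν (p * coordX X f) := fun f => by
    rw [sub_mul, one_mul, StSet.sub hν, hb']
  have h0 : 0 ≤ ν p := hν.2.2.1 p hp
  have h1 : 0 ≤ ν (1 - p) := hν.2.2.1 _ hq
  rcases h0.eq_or_lt with h0 | h0
  · rw [cut_zero hν hp h0.symm ‖f‖ (coord_bound X (hX.trans hKM) f), ← h0, zero_mul]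
  rcases h1.eq_or_lt with h1 | h1
  · have h2 := hqf f
    rw [cut_zero hν hq h1.symm ‖f‖ (coord_bound X (hX.trans hKM) f)] at h2
    have : ν p = 1 := by linarith
    rw [this]; linarith
  have hm1 := bary_mem hKc hKcl hKv hX (cutState_mem hν hp h0)
  have hm2 := bary_mem hKc hKcl hKv hX (cutState_mem hν hq h1)
  have := hw.2 hm1 hm2 ⟨ν p, ν (1 - p), h0, h1, by rw [hνq]; ring, by
    funext f
    simp only [bary, cutState, Pi.add_apply, Pi.smul_apply, smul_eq_mul]
    rw [hqf, mul_inv_cancel_left₀ h0.ne', mul_inv_cancel_left₀ h1.ne']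
    ring⟩
  have h3 := congrFun this f
  simp only [bary, cutState] at h3
  rw [← h3, mul_inv_cancel_left₀ h0.ne']

theorem bauer2 {K X : Set (BF G → ℝ)} (hKc : IsCompact K) (hKcl : IsClosed K)
    (hKv : Convex ℝ K) (hX : X ⊆ K) (hKM : K ⊆ Mn G) {ν : C(X, ℝ) → ℝ} (hν : ν ∈ StX X)
    {w : BF G → ℝ} (hw : w ∈ Set.extremePoints ℝ K) (hb : bary X ν = w) (f : BF G) :
    ν ((coordX X f - w f • 1) * (coordX X f - w f • 1)) = 0 := by
  have hb' : ν (coordX X f) = w f := congrFun hb f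
  set c : ℝ := ‖f‖ + 1 with hc
  have hc0 : 0 < c := by positivity
  have hbd : ∀ x, |coordX X f x| ≤ ‖f‖ := coord_bound X (hX.trans hKM) f
  have key := bauer1 hKc hKcl hKv hX hKM hν hw hb
    (p := (2 * c)⁻¹ • (coordX X f + c • 1)) (fun x => by
      have := abs_le.1 (hbd x)
      change 0 ≤ (2 * c)⁻¹ * (coordX X f x + c * 1)
      have : 0 ≤ coordX X f x + c * 1 := by linarith
      positivity) (fun x => by
      have := abs_le.1 (hbd x)
      change (2 * c)⁻¹ * (coordX X f x + c * 1) ≤ 1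
      rw [inv_mul_le_iff₀ (by positivity)]
      linarith) f
  rw [smul_mul_assoc, hν.2.1, hν.2.1, add_mul, hν.1, hν.1, smul_mul_assoc, one_mul, hν.2.1,
    hν.2.1, hν.2.2.2, hb', mul_assoc] at key
  have key2 := mul_left_cancel₀ (inv_ne_zero (by positivity)) key
  have : (coordX X f - w f • 1) * (coordX X f - w f • 1) =
      coordX X f * coordX X f - (2 * w f) • coordX X f + (w f * w f) • 1 := by
    ext x; simp; ring
  rw [this, hν.1, StSet.sub hν, hν.2.1, hν.2.1, hν.2.2.2, hb']
  linarith

theorem bauer3 {K X : Set (BF G → ℝ)} (hKc : IsCompact K) (hKcl : IsClosed K)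
    (hKv : Convex ℝ K) (hX : X ⊆ K) (hKM : K ⊆ Mn G) (hXc : IsCompact X)
    {ν : C(X, ℝ) → ℝ} (hν : ν ∈ StX X)
    {w : X} (hw : w.1 ∈ Set.extremePoints ℝ K) (hb : bary X ν = w.1) (h : C(X, ℝ)) :
    h w ≤ ν h := by
  haveI : CompactSpace X := isCompact_iff_compactSpace.1 hXc
  refine le_of_forall_pos_le_add fun δ hδ => ?_
  have hopen : IsOpen {x : X | h w - δ < h x} := isOpen_lt continuous_const h.continuous
  obtain ⟨o, ho, hoe⟩ := isOpen_induced_iff.1 hopen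
  have hwo : w.1 ∈ o := by
    have : w ∈ Subtype.val ⁻¹' o := by rw [hoe]; simp [hδ]
    exact this
  obtain ⟨I, u, hu, hIo⟩ := isOpen_pi_iff.1 ho _ hwo
  have hε : ∃ ε > 0, ∀ f ∈ I, Metric.ball (w.1 f) ε ⊆ u f := by
    choose! e he1 he2 using fun f (hf : f ∈ I) => Metric.isOpen_iff.1 (hu f hf).1 _ (hu f hf).2
    rcases I.eq_empty_or_nonempty with hI | hI
    · exact ⟨1, one_pos, by simp [hI]⟩
    · refine ⟨I.inf' hI e, (Finset.lt_inf'_iff hI).2 he1, fun f hf => ?_⟩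
      exact (Metric.ball_subset_ball (Finset.inf'_le e hf)).trans (he2 f hf)
  obtain ⟨ε, hε, hball⟩ := hε
  let C : ℝ := (h w + ‖h‖) / ε ^ 2
  have hC : 0 ≤ h w + ‖h‖ := by
    have := abs_le.1 (h.norm_coe_le_norm w)
    linarith
  have hC' : 0 ≤ C := by positivity
  let q : C(X, ℝ) := ∑ f ∈ I, (coordX X f - w.1 f • 1) * (coordX X f - w.1 f • 1)
  have hq : ν q = 0 := by
    simp only [q]
    rw [StX.sum hν]
    exact Finset.sum_eq_zero fun f _ => bauer2 hKc hKcl hKv hX hKM hν hw hb f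
  have hqx : ∀ x, q x = ∑ f ∈ I, (x.1 f - w.1 f) ^ 2 := fun x => by
    simp [q, ContinuousMap.sum_apply, coordX, sq]
  have hmain : ν ((h w - δ) • 1) ≤ ν (h + C • q) := by
    apply StX.mono hν
    intro x
    simp only [ContinuousMap.smul_apply, ContinuousMap.add_apply,
        ContinuousMap.one_apply, smul_eq_mul, mul_one]
    have hq0 : 0 ≤ q x := by rw [hqx]; positivity
    by_cases hx : h w - δ < h x
    · have := mul_nonneg hC' hq0
      linarith
    · have hxo : x.1 ∉ o := fun hxo => hx (by
        have : x ∈ Subtype.val ⁻¹' o := hxo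
        rw [hoe] at this
        exact this)
      have : ∃ f ∈ I, ε ≤ |x.1 f - w.1 f| := by
        by_contra hcon
        push Not at hcon
        exact hxo (hIo fun f hf => hball f hf (by
          rw [Metric.mem_ball, Real.dist_eq]; exact hcon f hf))
      obtain ⟨f, hf, hfe⟩ := this
      have h1 : ε ^ 2 ≤ q x := by
        rw [hqx]
        refine le_trans ?_ (Finset.single_le_sum (f := fun f => (x.1 f - w.1 f) ^ 2)
          (fun i _ => sq_nonneg _) hf)
        rw [← sq_abs (x.1 f - w.1 f)]
        gcongr
      have h2 : h w + ‖h‖ ≤ C * q x := by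
        calc h w + ‖h‖ = C * ε ^ 2 := by simp only [C]; field_simp
          _ ≤ C * q x := by gcongr
      have := abs_le.1 (h.norm_coe_le_norm x)
      linarith
  rw [hν.1, hν.2.1, hν.2.1, hν.2.2.2, hq] at hmain
  linarith

/-- Translate of a continuous function on a `G`-space. -/
def transX {X : Type*} [TopologicalSpace X] [MulAction G X] [ContinuousConstSMul G X]
    (g : G) (h : C(X, ℝ)) : C(X, ℝ) := ⟨fun x => h (g • x), by fun_prop⟩

/-- A mean on `G` invariant under a subgroup gives amenability of the subgroup. -/
theorem amen_of_mean (H : Subgroup G) {x : BF G → ℝ} (hx : x ∈ Mn G)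
    (hH : ∀ h ∈ H, actM h x = x) : IsAmenable H := by
  classical
  let q : G → G := fun g => (Quotient.out (Quotient.mk (QuotientGroup.rightRel H) g))
  have hq : ∀ g, g * (q g)⁻¹ ∈ H := fun g => by
    have := Quotient.mk_out (s := QuotientGroup.rightRel H) g
    exact QuotientGroup.rightRel_apply.1 this
  have hq2 : ∀ (h : H) g, q (h * g) = q g := fun h g => by
    have : Quotient.mk (QuotientGroup.rightRel H) (h * g) =
        Quotient.mk (QuotientGroup.rightRel H) g := by
      apply Quotient.sound
      apply QuotientGroup.rightRel_apply.2
      simp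
    simp only [q, this]
  let r : G → H := fun g => ⟨g * (q g)⁻¹, hq g⟩
  have hr : ∀ (h : H) g, r (h * g) = h * r g := fun h g => by
    apply Subtype.ext
    simp [r, hq2, mul_assoc]
  let pull : lp (fun _ : H => ℝ) ∞ → BF G := fun u => ⟨fun g => u (r g), by
    apply memℓp_infty
    obtain ⟨C, hC⟩ := memℓp_infty_iff.1 (lp.memℓp u)
    refine ⟨C, ?_⟩
    rintro _ ⟨g, rfl⟩
    exact hC ⟨r g, rfl⟩⟩
  refine ⟨{ toFun := fun u => x (pull u), map_add' := ?_, map_smul' := ?_ }, ?_, ?_, ?_⟩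
  · intro a b
    exact hx.1 (pull a) (pull b)
  · intro c a
    exact hx.2.1 c (pull a)
  · exact hx.2.2.2
  · intro f hf
    exact hx.2.2.1 (pull f) (fun k => hf _)
  · intro h f
    change x (pull (translInfty h f)) = x (pull f)
    have h1 : pull (translInfty h f) = translInfty (h : G) (pull f) := by
      ext g
      change f (h⁻¹ * r g) = f (r ((h : G)⁻¹ * g))
      rw [← hr]; rfl
    have h2 := congrFun (hH (h⁻¹ : H) (h⁻¹ : H).2) (pull f)
    rw [h1, ← h2]
    simp [actM]

theorem actM_ext {K : Set (BF G → ℝ)} (hK : MinK K) (g : G) {m : BF G → ℝ}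
    (hm : m ∈ Set.extremePoints ℝ K) : actM g m ∈ Set.extremePoints ℝ K := by
  refine ⟨hK.inv g m hm.1, ?_⟩
  rintro a ha b hb ⟨s, t, hs, ht, hst, h⟩
  have := hm.2 (hK.inv g⁻¹ a ha) (hK.inv g⁻¹ b hb) ⟨s, t, hs, ht, hst, by
    rw [← actM_comb, h, ← actM_mul, inv_mul_cancel, actM_one]⟩
  rw [← this, ← actM_mul, mul_inv_cancel, actM_one]

variable (G) in
theorem exists_boundary : ∃ (X : Type u) (_ : TopologicalSpace X) (_ : CompactSpace X)
    (_ : T2Space X) (_ : MulAction G X) (_ : ContinuousConstSMul G X), Nonempty X ∧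
    (∀ ν ∈ StX X, ∀ (h : C(X, ℝ)) (w : X) (δ : ℝ), 0 < δ → ∃ g : G, h w - δ < ν (transX g h)) ∧
    ∀ (x : X) (H : Subgroup G), H ≤ MulAction.stabilizer G x → IsAmenable H := by
  obtain ⟨K, hK⟩ := exists_MinK G
  let X : Set (BF G → ℝ) := closure (Set.extremePoints ℝ K)
  have hXK : X ⊆ K := closure_minimal (fun x hx => hx.1) hK.closed
  have hXc : IsCompact X := hK.compact.of_isClosed_subset isClosed_closure hXK
  have hinv : ∀ g : G, ∀ m ∈ X, actM g m ∈ X := fun g m hm =>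
    map_mem_closure (continuous_actM g) hm (fun a ha => actM_ext hK g ha)
  letI act : MulAction G X :=
    { smul := fun g x => ⟨actM g x.1, hinv g x.1 x.2⟩
      one_smul := fun x => Subtype.ext (actM_one _)
      mul_smul := fun g h x => Subtype.ext (actM_mul _ _ _) }
  haveI : ContinuousConstSMul G X :=
    ⟨fun g => Continuous.subtype_mk ((continuous_actM g).comp continuous_subtype_val) _⟩
  haveI : CompactSpace X := isCompact_iff_compactSpace.1 hXc
  refine ⟨X, inferInstance, inferInstance, inferInstance, act, inferInstance, ?_, ?_, ?_⟩
  · obtain ⟨x, hx⟩ := hK.compact.extremePoints_nonempty hK.ne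
    exact ⟨⟨x, subset_closure hx⟩⟩
  · intro ν hν h w δ hδ
    by_contra hcon
    push Not at hcon
    have hopen : IsOpen {x : X | h w - δ / 2 < h x} := isOpen_lt continuous_const h.continuous
    obtain ⟨o, ho, hoe⟩ := isOpen_induced_iff.1 hopen
    have hwo : w.1 ∈ o := by
      have : w ∈ Subtype.val ⁻¹' o := by rw [hoe]; simp [hδ]
      exact this
    obtain ⟨w0, hw0o, hw0⟩ := mem_closure_iff.1 w.2 o ho hwo
    have hw0h : h w - δ / 2 < h ⟨w0, subset_closure hw0⟩ := by
      have : (⟨w0, subset_closure hw0⟩ : X) ∈ Subtype.val ⁻¹' o := hw0o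
      rw [hoe] at this
      exact this
    let N : Set (C(X, ℝ) → ℝ) := StX X ∩ {ν' | ∀ g : G, ν' (transX g h) ≤ h w - δ}
    have hNcl : IsClosed N := by
      refine isClosed_StSet.inter ?_
      have : {ν' : C(X, ℝ) → ℝ | ∀ g : G, ν' (transX g h) ≤ h w - δ} =
          ⋂ g : G, {ν' | ν' (transX g h) ≤ h w - δ} := by ext; simp
      rw [this]
      exact isClosed_iInter fun g => isClosed_le (by fun_prop) continuous_const
    have hNc : IsCompact N := (isCompact_StX X).of_isClosed_subset hNcl Set.inter_subset_left
    have hNv : Convex ℝ N := by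
      refine convex_StSet.inter ?_
      intro a ha b hb s t hs ht hst g
      have h1 := ha g
      have h2 := hb g
      simp only [Pi.add_apply, Pi.smul_apply, smul_eq_mul]
      have : h w - δ = s * (h w - δ) + t * (h w - δ) := by rw [← add_mul, hst, one_mul]
      rw [this]
      gcongr
    have hbN : bary X '' N = K := by
      apply hK.min
      · rintro _ ⟨ν', hν', rfl⟩
        exact bary_mem hK.compact hK.closed hK.conv hXK hν'.1
      · exact ⟨_, ν, ⟨hν, hcon⟩, rfl⟩
      · exact (hNc.image (continuous_bary X)).isClosed
      · let bl : (C(X, ℝ) → ℝ) →ₗ[ℝ] (BF G → ℝ) :=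
          { toFun := bary X, map_add' := fun _ _ => rfl, map_smul' := fun _ _ => rfl }
        exact hNv.linear_image bl
      · rintro g _ ⟨ν', hν', rfl⟩
        refine ⟨fun k => ν' (transX g k), ⟨⟨?_, ?_, ?_, ?_⟩, ?_⟩, ?_⟩
        · exact fun a b => hν'.1.1 (transX g a) (transX g b)
        · exact fun c a => hν'.1.2.1 c (transX g a)
        · exact fun a ha => hν'.1.2.2.1 (transX g a) (fun x => ha (g • x))
        · exact hν'.1.2.2.2
        · intro g'
          have : transX g (transX g' h) = transX (g' * g) h := by
            ext x; simp [transX, mul_smul]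
          change ν' (transX g (transX g' h)) ≤ _
          rw [this]
          exact hν'.2 _
        · rfl
    have hw0K : w0 ∈ bary X '' N := by rw [hbN]; exact hw0.1
    obtain ⟨ν', hν', hb⟩ := hw0K
    have h1 := bauer3 hK.compact hK.closed hK.conv hXK hK.sub hXc hν'.1
      (w := ⟨w0, subset_closure hw0⟩) hw0 hb h
    have h2 := hν'.2 1
    have h3 : transX (1 : G) h = h := by ext x; simp [transX]
    rw [h3] at h2
    linarith
  · intro x H hH
    refine amen_of_mean H (hK.sub (hXK x.2)) fun h hh => ?_
    exact congrArg Subtype.val (MulAction.mem_stabilizer_iff.1 (hH hh))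


section Ops
variable {Y : Type*}

/-- Bounded operators on `ℓ²(Y)`. -/
abbrev BL (Y : Type*) := ℓ²(Y, ℂ) →L[ℂ] ℓ²(Y, ℂ)

theorem l2_summable (f : ℓ²(Y, ℂ)) : Summable fun i => ‖f i‖ ^ 2 := by
  have := (memℓp_gen_iff (by norm_num)).1 (lp.memℓp f)
  simpa using this

theorem l2_norm_sq (f : ℓ²(Y, ℂ)) : ‖f‖ ^ 2 = ∑' i, ‖f i‖ ^ 2 := by
  have := lp.norm_rpow_eq_tsum (p := 2) (by norm_num) f
  simpa using this

theorem l2_mem {f : Y → ℂ} (hf : Summable fun i => ‖f i‖ ^ 2) : Memℓp f 2 := by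
  apply memℓp_gen
  simpa using hf

variable [MulAction G Y]

/-- The permutation representation. -/
def perm (g : G) : BL Y :=
  LinearMap.mkContinuous
    { toFun := fun f => ⟨fun y => f (g⁻¹ • y), l2_mem
        ((MulAction.toPerm (α := G) (β := Y) g⁻¹).summable_iff.2 (l2_summable f))⟩
      map_add' := fun a b => by ext y; rfl
      map_smul' := fun a b => by ext y; rfl } 1 (by
    intro f
    rw [one_mul]
    apply le_of_eq
    rw [← sq_eq_sq₀ (norm_nonneg _) (norm_nonneg _), l2_norm_sq, l2_norm_sq]
    exact (MulAction.toPerm (α := G) (β := Y) g⁻¹).tsum_eq (fun y => ‖f y‖ ^ 2))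

theorem perm_apply (g : G) (f : ℓ²(Y, ℂ)) (y : Y) : perm g f y = f (g⁻¹ • y) := rfl

theorem perm_norm (g : G) : ‖(perm g : BL Y)‖ ≤ 1 :=
  LinearMap.mkContinuous_norm_le _ zero_le_one _

theorem perm_mul (g h : G) : (perm (g * h) : BL Y) = perm g * perm h := by
  ext f y
  change f _ = f _
  rw [mul_inv_rev, mul_smul]

theorem perm_one : (perm (1 : G) : BL Y) = 1 := by
  ext f y
  change f _ = f _
  rw [inv_one, one_smul]

theorem perm_single [DecidableEq Y] (g : G) (y : Y) (c : ℂ) :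
    (perm g : BL Y) (lp.single 2 y c) = lp.single 2 (g • y) c := by
  ext z
  rw [perm_apply, lp.single_apply, lp.single_apply]
  simp only [Pi.single_apply, inv_smul_eq_iff]

theorem perm_inner (g : G) (a b : ℓ²(Y, ℂ)) :
    inner ℂ ((perm g : BL Y) a) b = inner ℂ a ((perm g⁻¹ : BL Y) b) := by
  rw [lp.inner_eq_tsum, lp.inner_eq_tsum]
  rw [← (MulAction.toPerm (α := G) (β := Y) g).tsum_eq]
  refine tsum_congr fun y => ?_
  simp [perm_apply]

theorem perm_star (g : G) : star (perm g : BL Y) = perm g⁻¹ := by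
  rw [ContinuousLinearMap.star_eq_adjoint]
  symm
  rw [ContinuousLinearMap.eq_adjoint_iff]
  intro a b
  rw [perm_inner, inv_inv]

theorem lreg_eq_perm (g : G) : lreg g = (perm g : BL G) := by
  unfold lreg
  unfold lregE
  rfl

variable {X : Type*} [TopologicalSpace X] [CompactSpace X]

theorem mulop_bound (o : Y → X) (k : C(X, ℝ)) (f : ℓ²(Y, ℂ)) (y : Y) :
    ‖(k (o y) : ℂ) * f y‖ ^ 2 ≤ ‖k‖ ^ 2 * ‖f y‖ ^ 2 := by
  rw [norm_mul, mul_pow]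
  have : ‖(k (o y) : ℂ)‖ ≤ ‖k‖ := by
    rw [Complex.norm_real]; exact k.norm_coe_le_norm _
  gcongr

/-- Multiplication operator by a continuous function, through `o : Y → X`. -/
def mulop (o : Y → X) (k : C(X, ℝ)) : BL Y :=
  LinearMap.mkContinuous
    { toFun := fun f => ⟨fun y => (k (o y) : ℂ) * f y, l2_mem
        (Summable.of_nonneg_of_le (fun _ => by positivity) (mulop_bound o k f)
          ((l2_summable f).mul_left _))⟩
      map_add' := fun a b => by ext y; exact mul_add _ _ _
      map_smul' := fun a b => by ext y; exact mul_left_comm _ _ _ } ‖k‖ (by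
    intro f
    rw [← sq_le_sq₀ (norm_nonneg _) (by positivity), mul_pow, l2_norm_sq, l2_norm_sq,
      ← tsum_mul_left]
    exact Summable.tsum_le_tsum (mulop_bound o k f) (Summable.of_nonneg_of_le
      (fun _ => by positivity) (mulop_bound o k f) ((l2_summable f).mul_left _))
      ((l2_summable f).mul_left _))

theorem mulop_apply (o : Y → X) (k : C(X, ℝ)) (f : ℓ²(Y, ℂ)) (y : Y) :
    mulop o k f y = (k (o y) : ℂ) * f y := rfl

theorem mulop_norm (o : Y → X) (k : C(X, ℝ)) : ‖mulop o k‖ ≤ ‖k‖ :=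
  LinearMap.mkContinuous_norm_le _ (norm_nonneg _) _

theorem mulop_add (o : Y → X) (k l : C(X, ℝ)) : mulop o (k + l) = mulop o k + mulop o l := by
  ext f y
  change ((k (o y) + l (o y) : ℝ) : ℂ) * f y = (k (o y) : ℂ) * f y + (l (o y) : ℂ) * f y
  push_cast; ring

theorem mulop_smul (o : Y → X) (c : ℝ) (k : C(X, ℝ)) :
    mulop o (c • k) = (c : ℂ) • mulop o k := by
  ext f y
  change ((c * k (o y) : ℝ) : ℂ) * f y = (c : ℂ) * ((k (o y) : ℂ) * f y)
  push_cast; ring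

theorem mulop_one (o : Y → X) : mulop o (1 : C(X, ℝ)) = 1 := by
  ext f y
  change ((1 : ℝ) : ℂ) * f y = f y
  simp

theorem mulop_conj [MulAction G X] [ContinuousConstSMul G X] (o : Y → X)
    (ho : ∀ (g : G) y, o (g • y) = g • o y) (g : G) (k : C(X, ℝ)) :
    (perm g⁻¹ : BL Y) * mulop o k * perm g = mulop o (transX g k) := by
  ext f y
  change (k (o (g⁻¹⁻¹ • y)) : ℂ) * f (g⁻¹ • (g⁻¹⁻¹ • y)) = (k (g • o y) : ℂ) * f y
  simp [ho]

theorem mulop_re_state (o : Y → X) (ψ : BL Y →ₗ[ℂ] ℂ) (hψ : ∀ T, ‖ψ T‖ ≤ ‖T‖) (h1 : ψ 1 = 1) :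
    (fun k => (ψ (mulop o k)).re) ∈ StX X := by
  refine ⟨fun a b => by simp [mulop_add], fun c a => by simp [mulop_smul], fun k hk => ?_,
    by simp [mulop_one, h1]⟩
  have h2 : ‖‖k‖ • (1 : C(X, ℝ)) - k‖ ≤ ‖k‖ := by
    rw [ContinuousMap.norm_le _ (norm_nonneg _)]
    intro x
    have h3 : k x ≤ ‖k‖ := (le_abs_self _).trans (k.norm_coe_le_norm x)
    have h4 : 0 ≤ k x := hk x
    simp only [ContinuousMap.sub_apply, ContinuousMap.smul_apply, ContinuousMap.one_apply,
      smul_eq_mul, mul_one, Real.norm_eq_abs, abs_le]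
    constructor <;> linarith
  have h3 := (hψ _).trans ((mulop_norm o (‖k‖ • (1 : C(X, ℝ)) - k)).trans h2)
  have h4 : mulop o (‖k‖ • (1 : C(X, ℝ)) - k) = (‖k‖ : ℂ) • 1 - mulop o k := by
    have := mulop_add o (‖k‖ • (1 : C(X, ℝ)) - k) k
    rw [sub_add_cancel, mulop_smul, mulop_one] at this
    rw [this]; abel
  rw [h4, map_sub, map_smul, h1] at h3
  have h5 := (Complex.re_le_norm _).trans h3
  simp at h5
  simpa using h5

theorem mulop_row (o : Y → X) (h : C(X, ℝ)) (h0 : ∀ x, 0 ≤ h x) (h1 : ∀ x, h x ≤ 1)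
    (a b : ℓ²(Y, ℂ)) : ‖mulop o h a + mulop o (1 - h) b‖ ^ 2 ≤ ‖a‖ ^ 2 + ‖b‖ ^ 2 := by
  rw [l2_norm_sq, l2_norm_sq, l2_norm_sq, ← (l2_summable a).tsum_add (l2_summable b)]
  refine Summable.tsum_le_tsum (fun y => ?_) (l2_summable _) ((l2_summable a).add (l2_summable b))
  change ‖(h (o y) : ℂ) * a y + ((1 - h (o y) : ℝ) : ℂ) * b y‖ ^ 2 ≤ _
  have := h0 (o y)
  have := h1 (o y)
  have hn := norm_add_le ((h (o y) : ℂ) * a y) (((1 - h (o y) : ℝ) : ℂ) * b y)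
  rw [norm_mul, norm_mul, Complex.norm_real, Complex.norm_real, Real.norm_of_nonneg (h0 _),
    Real.norm_of_nonneg (by linarith)] at hn
  have hs := pow_le_pow_left₀ (norm_nonneg _) hn 2
  refine hs.trans ?_
  nlinarith [mul_nonneg (h0 (o y)) (sub_nonneg.2 (h1 (o y))), sq_nonneg (‖a y‖ - ‖b y‖),
    mul_nonneg (mul_nonneg (h0 (o y)) (sub_nonneg.2 (h1 (o y)))) (sq_nonneg (‖a y‖ - ‖b y‖)),
    mul_nonneg (h0 (o y)) (sq_nonneg (‖b y‖)),
    mul_nonneg (sub_nonneg.2 (h1 (o y))) (sq_nonneg (‖a y‖))]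

theorem mulop_col (o : Y → X) (h : C(X, ℝ)) (h0 : ∀ x, 0 ≤ h x) (h1 : ∀ x, h x ≤ 1)
    (a : ℓ²(Y, ℂ)) : ‖mulop o h a‖ ^ 2 + ‖mulop o (1 - h) a‖ ^ 2 ≤ ‖a‖ ^ 2 := by
  rw [l2_norm_sq, l2_norm_sq, l2_norm_sq, ← (l2_summable _).tsum_add (l2_summable _)]
  refine Summable.tsum_le_tsum (fun y => ?_) ((l2_summable _).add (l2_summable _)) (l2_summable a)
  change ‖(h (o y) : ℂ) * a y‖ ^ 2 + ‖((1 - h (o y) : ℝ) : ℂ) * a y‖ ^ 2 ≤ _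
  have := h0 (o y)
  have := h1 (o y)
  rw [norm_mul, norm_mul, Complex.norm_real, Complex.norm_real, Real.norm_of_nonneg (h0 _),
    Real.norm_of_nonneg (by linarith)]
  nlinarith [mul_nonneg (mul_nonneg (h0 (o y)) (sub_nonneg.2 (h1 (o y)))) (sq_nonneg ‖a y‖)]

theorem small_aux (ψ : BL Y →ₗ[ℂ] ℂ) (hψ : ∀ T, ‖ψ T‖ ≤ ‖T‖) (P R : BL Y) {δ : ℝ} (hδ : 0 < δ)
    (hP : 1 - δ ≤ (ψ P).re) (hn : ∀ z : ℂ, ‖P + z • R‖ ^ 2 ≤ 1 + ‖z‖ ^ 2) :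
    ‖ψ R‖ ≤ √(2 * δ) := by
  by_contra hc
  push Not at hc
  have hR : ψ R ≠ 0 := by
    intro h; rw [h, norm_zero] at hc; exact absurd hc (not_lt.2 (Real.sqrt_nonneg _))
  set r : ℝ := √(2 * δ)
  have hr : 0 < r := Real.sqrt_pos.2 (by positivity)
  have hr2 : r ^ 2 = 2 * δ := Real.sq_sqrt (by positivity)
  have hR' : 0 < ‖ψ R‖ := norm_pos_iff.2 hR
  set z : ℂ := (r / ‖ψ R‖ : ℝ) * star (ψ R)
  have hz : ‖z‖ = r := by
    simp only [z, norm_mul, Complex.norm_real, norm_star]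
    rw [Real.norm_of_nonneg (by positivity), div_mul_cancel₀ _ hR'.ne']
  have hz2 : z * ψ R = (r * ‖ψ R‖ : ℝ) := by
    simp only [z, Complex.star_def]
    rw [mul_assoc, ← Complex.normSq_eq_conj_mul_self, Complex.normSq_eq_norm_sq]
    rw [← Complex.ofReal_mul]
    congr 1
    field_simp
  have h1 := hn z
  have h2 : (ψ P).re + r * ‖ψ R‖ ≤ ‖P + z • R‖ := by
    refine le_trans ?_ (hψ _)
    refine le_trans ?_ (Complex.re_le_norm _)
    rw [map_add, map_smul, smul_eq_mul, hz2]
    simp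
  rw [hz] at h1
  have h3 : 1 - δ + r * r < ‖P + z • R‖ := by
    have := mul_lt_mul_of_pos_left hc hr
    linarith
  have h4 : (1 + δ) ^ 2 < ‖P + z • R‖ ^ 2 := by
    apply pow_lt_pow_left₀ _ (by positivity) (by norm_num)
    nlinarith
  nlinarith

theorem small_left (o : Y → X) (h : C(X, ℝ)) (h0 : ∀ x, 0 ≤ h x) (h1 : ∀ x, h x ≤ 1)
    (ψ : BL Y →ₗ[ℂ] ℂ) (hψ : ∀ T, ‖ψ T‖ ≤ ‖T‖) (A : BL Y) (hA : ‖A‖ ≤ 1) {δ : ℝ} (hδ : 0 < δ)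
    (hP : 1 - δ ≤ (ψ (mulop o h)).re) : ‖ψ (mulop o (1 - h) * A)‖ ≤ √(2 * δ) := by
  refine small_aux ψ hψ _ _ hδ hP fun z => ?_
  have : ‖mulop o h + z • (mulop o (1 - h) * A)‖ ≤ √(1 + ‖z‖ ^ 2) := by
    refine ContinuousLinearMap.opNorm_le_bound _ (Real.sqrt_nonneg _) fun v => ?_
    rw [← sq_le_sq₀ (norm_nonneg _) (by positivity), mul_pow, Real.sq_sqrt (by positivity)]
    have := mulop_row o h h0 h1 v (z • A v)
    rw [map_smul] at this
    refine this.trans ?_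
    rw [norm_smul, mul_pow, add_mul, one_mul]
    have : ‖A v‖ ≤ ‖v‖ := (A.le_opNorm v).trans (mul_le_of_le_one_left (norm_nonneg _) hA)
    gcongr
  calc _ ≤ √(1 + ‖z‖ ^ 2) ^ 2 := by gcongr
    _ = _ := Real.sq_sqrt (by positivity)

theorem small_right (o : Y → X) (h : C(X, ℝ)) (h0 : ∀ x, 0 ≤ h x) (h1 : ∀ x, h x ≤ 1)
    (ψ : BL Y →ₗ[ℂ] ℂ) (hψ : ∀ T, ‖ψ T‖ ≤ ‖T‖) (A : BL Y) (hA : ‖A‖ ≤ 1) {δ : ℝ} (hδ : 0 < δ)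
    (hP : 1 - δ ≤ (ψ (mulop o h)).re) : ‖ψ (A * mulop o (1 - h))‖ ≤ √(2 * δ) := by
  refine small_aux ψ hψ _ _ hδ hP fun z => ?_
  have : ‖mulop o h + z • (A * mulop o (1 - h))‖ ≤ √(1 + ‖z‖ ^ 2) := by
    refine ContinuousLinearMap.opNorm_le_bound _ (Real.sqrt_nonneg _) fun v => ?_
    rw [← sq_le_sq₀ (norm_nonneg _) (by positivity), mul_pow, Real.sq_sqrt (by positivity)]
    have hc := mulop_col o h h0 h1 v
    have hA' : ‖A (mulop o (1 - h) v)‖ ≤ ‖mulop o (1 - h) v‖ :=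
      (A.le_opNorm _).trans (mul_le_of_le_one_left (norm_nonneg _) hA)
    have hn : ‖(mulop o h + z • (A * mulop o (1 - h))) v‖
        ≤ ‖mulop o h v‖ + ‖z‖ * ‖mulop o (1 - h) v‖ := by
      refine (norm_add_le (mulop o h v) (z • A (mulop o (1 - h) v))).trans ?_
      rw [norm_smul]
      gcongr
    refine (pow_le_pow_left₀ (norm_nonneg _) hn 2).trans ?_
    calc _ ≤ (1 + ‖z‖ ^ 2) * (‖mulop o h v‖ ^ 2 + ‖mulop o (1 - h) v‖ ^ 2) := by
          nlinarith [sq_nonneg (‖z‖ * ‖mulop o h v‖ - ‖mulop o (1 - h) v‖)]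
      _ ≤ _ := by gcongr
  calc _ ≤ √(1 + ‖z‖ ^ 2) ^ 2 := by gcongr
    _ = _ := Real.sq_sqrt (by positivity)

/-- Strong proximality, packaged. -/
def SPr (G : Type*) [Group G] (X : Type*) [TopologicalSpace X] [MulAction G X]
    [ContinuousConstSMul G X] : Prop :=
  ∀ ν ∈ StX X, ∀ (h : C(X, ℝ)) (w : X) (δ : ℝ), 0 < δ → ∃ g : G, h w - δ < ν (transX g h)

theorem exists_push [MulAction G X] [ContinuousConstSMul G X] (hSP : SPr G X) (o : Y → X)
    (ho : ∀ (g : G) y, o (g • y) = g • o y) (ψ : BL Y →ₗ[ℂ] ℂ) (hψ : ∀ T, ‖ψ T‖ ≤ ‖T‖)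
    (h1 : ψ 1 = 1) (h : C(X, ℝ)) (w : X) (hw : h w = 1) {δ : ℝ} (hδ : 0 < δ) :
    ∃ (g : G) (ψ' : BL Y →ₗ[ℂ] ℂ), (∀ T, ‖ψ' T‖ ≤ ‖T‖) ∧ 1 - δ ≤ (ψ' (mulop o h)).re ∧
      ∀ T, ψ' T = ψ (perm g⁻¹ * T * perm g) := by
  obtain ⟨g, hg⟩ := hSP _ (mulop_re_state o ψ hψ h1) h w δ hδ
  refine ⟨g, ψ ∘ₗ LinearMap.mulRight ℂ (perm g : BL Y) ∘ₗ LinearMap.mulLeft ℂ (perm g⁻¹ : BL Y),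
    fun T => ?_, ?_, fun T => rfl⟩
  · refine (hψ _).trans ?_
    change ‖(perm g⁻¹ : BL Y) * T * perm g‖ ≤ _
    refine (norm_mul_le _ _).trans ?_
    refine (mul_le_mul (norm_mul_le _ _) (perm_norm g) (norm_nonneg _) (by positivity)).trans ?_
    rw [mul_one]
    exact mul_le_of_le_one_left (norm_nonneg _) (perm_norm _)
  · change _ ≤ (ψ ((perm g⁻¹ : BL Y) * mulop o h * perm g)).re
    rw [mulop_conj o ho]
    rw [hw] at hg
    exact hg.le

end Ops


theorem mem_conjSub {g t : G} {H : Subgroup G} : t ∈ conjSub g H ↔ g⁻¹ * t * g ∈ H := by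
  unfold conjSub
  constructor
  · rintro ⟨k, hk, rfl⟩
    have : g⁻¹ * (g * k * g⁻¹) * g = k := by group
    change g⁻¹ * (g * k * g⁻¹) * g ∈ H
    rw [this]; exact hk
  · intro h
    refine ⟨_, h, ?_⟩
    change g * (g⁻¹ * t * g) * g⁻¹ = t
    group

theorem rec_of_F {H : Subgroup G} (F : Finset G) (h1 : (1 : G) ∉ F)
    (hF : ∀ g, ∃ t ∈ F, t ∈ conjSub g H) : IsRecurrent H := by
  classical
  intro hcl
  have h2 := (@closure_induced (Subgroup G) (G → Bool) _
    (fun (H : Subgroup G) (g : G) => @decide (g ∈ H) (Classical.propDecidable _)) ⊥ _).1 hcl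
  rw [mem_closure_iff] at h2
  obtain ⟨v, hv, K, ⟨g, rfl⟩, rfl⟩ := h2 {v : G → Bool | ∀ t ∈ F, v t = false} (by
    have : {v : G → Bool | ∀ t ∈ F, v t = false} = (F : Set G).pi fun _ => {false} := by
      ext v; simp [Set.mem_pi]
    rw [this]
    exact isOpen_set_pi F.finite_toSet fun _ _ => isOpen_discrete _) (by
    intro t ht
    simp only [decide_eq_false_iff_not, Subgroup.mem_bot]
    rintro rfl; exact h1 ht)
  obtain ⟨t, ht, htg⟩ := hF g
  have := hv t ht
  simp only [decide_eq_false_iff_not] at this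
  exact this htg

theorem F_of_rec {H : Subgroup G} (hH : IsRecurrent H) :
    ∃ F : Finset G, (1 : G) ∉ F ∧ ∀ g, ∃ t ∈ F, t ∈ conjSub g H := by
  classical
  by_contra hcon
  push Not at hcon
  apply hH
  refine (@closure_induced (Subgroup G) (G → Bool) _
    (fun (H : Subgroup G) (g : G) => @decide (g ∈ H) (Classical.propDecidable _)) ⊥ _).2 ?_
  rw [mem_closure_iff]
  intro o ho hbo
  obtain ⟨I, u, hu, hIo⟩ := isOpen_pi_iff.1 ho _ hbo
  obtain ⟨g, hg⟩ := hcon (I.erase 1) (by simp)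
  refine ⟨_, hIo ?_, _, ⟨g, rfl⟩, rfl⟩
  intro t ht
  have h3 := (hu t ht).2
  have : (t ∈ conjSub g H) ↔ t ∈ (⊥ : Subgroup G) := by
    rw [Subgroup.mem_bot]
    constructor
    · intro h
      by_contra hne
      exact hg t (Finset.mem_erase.2 ⟨hne, ht⟩) h
    · rintro rfl; exact one_mem _
  simpa only [this] using h3

section Dyn
variable {X : Type*} [TopologicalSpace X] [CompactSpace X] [T2Space X]

theorem bump (w : X) {U : Set X} (hU : U ∈ nhds w) : ∃ h : C(X, ℝ), h w = 1 ∧ (∀ x, 0 ≤ h x) ∧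
    (∀ x, h x ≤ 1) ∧ ∀ x ∉ U, h x = 0 := by
  obtain ⟨V, hVU, hVo, hwV⟩ := mem_nhds_iff.1 hU
  obtain ⟨h, h0, h1, h2⟩ := exists_continuous_zero_one_of_isClosed (s := Vᶜ) (t := {w})
    hVo.isClosed_compl isClosed_singleton (by simpa using hwV)
  exact ⟨h, h1 rfl, fun x => (h2 x).1, fun x => (h2 x).2, fun x hx => h0 fun hV => hx (hVU hV)⟩

variable [MulAction G X] [ContinuousConstSMul G X]

theorem prox (hSP : SPr G X) {ι : Type*} [Fintype ι] (x : ι → X) (w : X) {U : Set X}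
    (hU : U ∈ nhds w) : ∃ g : G, ∀ i, g • x i ∈ U := by
  classical
  rcases isEmpty_or_nonempty ι with he | he
  · exact ⟨1, fun i => he.elim i⟩
  obtain ⟨h, hw, h0, h1, hU'⟩ := bump w hU
  set n : ℝ := (Fintype.card ι : ℝ) with hn
  have hn0 : 0 < n := by rw [hn]; exact_mod_cast Fintype.card_pos
  obtain ⟨g, hg⟩ := hSP (fun k => n⁻¹ * ∑ i, k (x i)) (by
    refine ⟨fun a b => ?_, fun c a => ?_, fun k hk => ?_, ?_⟩
    · simp [Finset.sum_add_distrib, mul_add]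
    · simp only [ContinuousMap.smul_apply, smul_eq_mul, ← Finset.mul_sum]; ring
    · have : 0 ≤ ∑ i, k (x i) := Finset.sum_nonneg fun i _ => hk (x i)
      positivity
    · simp [hn]) h w n⁻¹ (by positivity)
  refine ⟨g, fun i => ?_⟩
  by_contra hi
  have h2 : ∑ j, h (g • x j) ≤ n - 1 := by
    rw [← Finset.add_sum_erase _ _ (Finset.mem_univ i), hU' _ hi, zero_add]
    refine (Finset.sum_le_sum (fun j _ => h1 _)).trans ?_
    rw [Finset.sum_const, Finset.card_erase_of_mem (Finset.mem_univ i), nsmul_eq_mul, mul_one,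
      Finset.card_univ, Nat.cast_sub Fintype.card_pos]
    simp [hn]
  have h3 : h w - n⁻¹ < n⁻¹ * ∑ j, h (g • x j) := hg
  have h4 : n⁻¹ * ∑ j, h (g • x j) ≤ n⁻¹ * (n - 1) := by gcongr
  rw [hw] at h3
  rw [mul_sub, inv_mul_cancel₀ hn0.ne'] at h4
  linarith

variable (G) in
/-- Elements acting trivially near `x`. -/
def germ (x : X) : Subgroup G where
  carrier := {t | ∀ᶠ y in nhds x, t • y = y}
  one_mem' := by simp
  mul_mem' := by
    intro a b ha hb
    simp only [Set.mem_setOf_eq] at *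
    filter_upwards [ha, hb] with y h1 h2
    rw [mul_smul, h2, h1]
  inv_mem' := by
    intro a ha
    simp only [Set.mem_setOf_eq] at *
    filter_upwards [ha] with y h1
    rw [inv_smul_eq_iff, h1]

theorem mem_germ {x : X} {t : G} : t ∈ germ G x ↔ ∀ᶠ y in nhds x, t • y = y := Iff.rfl

theorem germ_le (x : X) : germ G x ≤ MulAction.stabilizer G x := fun t ht =>
  MulAction.mem_stabilizer_iff.2 (mem_germ.1 ht).self_of_nhds

theorem mem_germ_smul' {x : X} {g t : G} (h : t ∈ germ G x) : g * t * g⁻¹ ∈ germ G (g • x) := by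
  rw [mem_germ] at *
  have hc : Filter.Tendsto (fun y : X => g⁻¹ • y) (nhds (g • x)) (nhds x) := by
    have := (continuous_const_smul (T := X) g⁻¹).tendsto (g • x)
    rwa [inv_smul_smul] at this
  filter_upwards [hc.eventually h] with y hy
  rw [mul_smul, mul_smul, hy, smul_inv_smul]

theorem mem_germ_smul {x : X} {g t : G} : t ∈ germ G (g • x) ↔ g⁻¹ * t * g ∈ germ G x := by
  constructor
  · intro h
    have := mem_germ_smul' (g := g⁻¹) h
    rwa [inv_smul_smul, inv_inv] at this
  · intro h
    have := mem_germ_smul' (g := g) h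
    have h2 : g * (g⁻¹ * t * g) * g⁻¹ = t := by group
    rwa [h2] at this

theorem germ_nhds {x : X} {A : Set G} (hA : A.Finite) (h : ∀ t ∈ A, t ∈ germ G x) :
    {y : X | ∀ t ∈ A, t ∈ germ G y} ∈ nhds x := by
  change ∀ᶠ y in nhds x, ∀ t ∈ A, t ∈ germ G y
  rw [Filter.eventually_all_finite hA]
  intro t ht
  exact eventually_eventually_nhds.2 (h t ht)

theorem exists_sub_of_F [Nonempty X] (hSP : SPr G X)
    (ham : ∀ (x : X) (H : Subgroup G), H ≤ MulAction.stabilizer G x → IsAmenable H)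
    (F : Finset G) (h1 : (1 : G) ∉ F) (hF : ∀ x : X, ∃ t ∈ F, t • x = x) :
    ∃ H : Subgroup G, IsAmenable H ∧ IsRecurrent H ∧
        (((H : Set G).Finite ∧ H.Normal) ∨ IsNormalish H) := by
  classical
  by_cases hall : ∀ (n : ℕ) (x : Fin n → X), {g : G | ∀ i, g • x i = x i}.Infinite
  · obtain ⟨x⟩ := ‹Nonempty X›
    have hc : ∀ g t : G, t ∈ conjSub g (MulAction.stabilizer G x) ↔ t • (g • x) = g • x := by
      intro g t
      rw [mem_conjSub, MulAction.mem_stabilizer_iff, mul_smul, mul_smul, inv_smul_eq_iff]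
    refine ⟨MulAction.stabilizer G x, ham x _ le_rfl, rec_of_F F h1 fun g => ?_, Or.inr ?_⟩
    · obtain ⟨t, ht, hx⟩ := hF (g • x)
      exact ⟨t, ht, (hc g t).2 hx⟩
    · intro n g
      convert hall n (fun i => g i • x) using 1
      ext t
      simp [hc]
  push Not at hall
  obtain ⟨n, x, hL⟩ := hall
  set L := {g : G | ∀ i, g • x i = x i} with hLdef
  have hcard : ∀ (w : X) (A : Finset G), (∀ t ∈ A, t ∈ germ G w) → A.card ≤ L.ncard := by
    intro w A hA
    obtain ⟨g, hg⟩ := prox hSP x w (germ_nhds A.finite_toSet hA)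
    rw [← Set.ncard_coe_finset]
    refine Set.ncard_le_ncard_of_injOn (fun t => g⁻¹ * t * g) ?_ ?_ hL
    · intro t ht i
      exact MulAction.mem_stabilizer_iff.1 (germ_le _ (mem_germ_smul.1 (hg i t ht)))
    · intro a _ b _ hab
      simpa using hab
  have hfin : ∀ w : X, (germ G w : Set G).Finite := by
    intro w
    by_contra hinf
    obtain ⟨A, hA, hAc⟩ := Set.Infinite.exists_subset_card_eq hinf (L.ncard + 1)
    have := hcard w A hA
    omega
  have hbd : ∀ w : X, (germ G w : Set G).ncard ≤ L.ncard := by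
    intro w
    rw [Set.ncard_eq_toFinset_card _ (hfin w)]
    exact hcard w _ (by simp)
  obtain ⟨w, hw⟩ : ∃ w : X, ∀ w' : X, (germ G w' : Set G).ncard ≤ (germ G w : Set G).ncard := by
    have hb : BddAbove (Set.range fun w : X => (germ G w : Set G).ncard) :=
      ⟨L.ncard, by rintro _ ⟨w, rfl⟩; exact hbd w⟩
    obtain ⟨w, hw⟩ := Nat.sSup_mem (Set.range_nonempty _) hb
    refine ⟨w, fun w' => ?_⟩
    have := le_csSup hb (Set.mem_range_self w')
    rw [← hw] at this
    exact this
  have heq : ∀ y z : X, germ G y = germ G z := by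
    intro y z
    obtain ⟨g, hg⟩ := prox hSP ![y, z] w (germ_nhds (hfin w) (fun t ht => ht))
    have hmx : ∀ v : X, (∀ t ∈ (germ G w : Set G), t ∈ germ G (g • v)) →
        (germ G w : Set G) = germ G (g • v) := fun v hv =>
      Set.eq_of_subset_of_ncard_le hv (hw _) (hfin _)
    have e1 := hmx y (hg 0)
    have e2 := hmx z (hg 1)
    ext t
    have e3 : germ G (g • y) = germ G (g • z) := SetLike.coe_injective (e1.symm.trans e2)
    have h3 : g⁻¹ * (g * t * g⁻¹) * g = t := by group
    rw [← h3, ← mem_germ_smul, ← mem_germ_smul, e3]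
  have hnorm : ∀ (t : G) (g : G), t ∈ germ G w → g * t * g⁻¹ ∈ germ G w := by
    intro t g ht
    rw [heq w (g • w)]
    exact mem_germ_smul' ht
  obtain ⟨⟨t, ht⟩, htint⟩ := nonempty_interior_of_iUnion_of_closed
    (f := fun t : F => {x : X | (t : G) • x = x})
    (fun t => isClosed_eq (continuous_const_smul _) continuous_id) (by
      ext x
      obtain ⟨t, ht, hx⟩ := hF x
      simp only [Set.mem_iUnion, Set.mem_setOf_eq, Set.mem_univ, iff_true]
      exact ⟨⟨t, ht⟩, hx⟩)
  obtain ⟨v, hv⟩ := htint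
  have htw : t ∈ germ G w := by
    rw [heq w v, mem_germ]
    exact mem_interior_iff_mem_nhds.1 hv
  refine ⟨germ G w, ham w _ (germ_le w), rec_of_F {t} ?_ fun g => ⟨t, by simp, ?_⟩,
    Or.inl ⟨hfin w, ⟨fun t ht g => hnorm t g ht⟩⟩⟩
  · simp only [Finset.mem_singleton]
    rintro rfl
    exact h1 ht
  · rw [mem_conjSub]
    simpa using hnorm t g⁻¹ htw

end Dyn


theorem adjoin_group_span {A : Type*} [Ring A] [StarRing A] [Algebra ℂ A] [StarModule ℂ A]
    (u : G → A) (hm : ∀ g h, u (g * h) = u g * u h) (h1 : u 1 = 1) (hs : ∀ g, star (u g) = u g⁻¹)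
    {x : A} (hx : x ∈ StarAlgebra.adjoin ℂ (Set.range u)) :
    ∃ c : G →₀ ℂ, (c.sum fun t a => a • u t) = x := by
  rw [← Finsupp.mem_span_range_iff_exists_finsupp]
  induction hx using StarAlgebra.adjoin_induction with
  | mem x h => exact Submodule.subset_span h
  | algebraMap r =>
    rw [Algebra.algebraMap_eq_smul_one, ← h1]
    exact Submodule.smul_mem _ _ (Submodule.subset_span ⟨1, rfl⟩)
  | add x y _ _ hx hy => exact add_mem hx hy
  | mul x y _ _ hx hy =>
    have := Submodule.mul_mem_mul hx hy
    rw [Submodule.span_mul_span] at this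
    refine Submodule.span_mono ?_ this
    rintro _ ⟨_, ⟨a, rfl⟩, _, ⟨b, rfl⟩, rfl⟩
    exact ⟨a * b, hm a b⟩
  | star x hx0 hx =>
    clear hx0
    induction hx using Submodule.span_induction with
    | mem x h =>
      obtain ⟨a, rfl⟩ := h
      rw [hs]
      exact Submodule.subset_span ⟨_, rfl⟩
    | zero => rw [star_zero]; exact zero_mem _
    | add x y _ _ hx hy => rw [star_add]; exact add_mem hx hy
    | smul c x _ hx => rw [star_smul]; exact Submodule.smul_mem _ _ hx

theorem redCstar_eq : redCstar G =
    (StarAlgebra.adjoin ℂ (Set.range (fun g : G => (perm g : BL G)))).topologicalClosure := by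
  unfold redCstar
  congr 3
  funext g
  exact lreg_eq_perm g

theorem redCstar_isClosed : IsClosed (redCstar G : Set (BL G)) := by
  rw [redCstar_eq]
  exact StarSubalgebra.isClosed_topologicalClosure _

theorem perm_mem_red (g : G) : (perm g : BL G) ∈ redCstar G := by
  rw [redCstar_eq]
  exact StarSubalgebra.le_topologicalClosure _ (StarAlgebra.subset_adjoin ℂ _ ⟨g, rfl⟩)

theorem red_approx {a : BL G} (ha : a ∈ redCstar G) {ε : ℝ} (hε : 0 < ε) :
    ∃ c : G →₀ ℂ, ‖a - c.sum fun t z => z • (perm t : BL G)‖ < ε := by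
  rw [redCstar_eq] at ha
  have ha' : a ∈ closure (StarAlgebra.adjoin ℂ (Set.range (fun g : G => (perm g : BL G))) :
    Set (BL G)) := ha
  obtain ⟨b, hb, hab⟩ := Metric.mem_closure_iff.1 ha' ε hε
  obtain ⟨c, rfl⟩ := adjoin_group_span (fun g : G => (perm g : BL G)) perm_mul perm_one
    perm_star hb
  exact ⟨c, by rwa [← dist_eq_norm]⟩

theorem exists_state_of_ideal (I : TwoSidedIdeal (redCstar G)) (hI : I ≠ ⊤) :
    ∃ ψ : BL G →ₗ[ℂ] ℂ, (∀ T, ‖ψ T‖ ≤ ‖T‖) ∧ ψ 1 = 1 ∧ ∀ x ∈ I, ψ (x : BL G) = 0 := by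
  haveI : CompleteSpace (redCstar G) := redCstar_isClosed.completeSpace_coe
  have hone : ∀ x ∈ I, 1 ≤ ‖(1 : redCstar G) - x‖ := by
    intro x hx
    by_contra hlt
    push Not at hlt
    apply hI
    rw [← TwoSidedIdeal.one_mem_iff]
    have hu : IsUnit x := by
      have := (Units.oneSub (1 - x) hlt).isUnit
      simpa using this
    obtain ⟨u, rfl⟩ := hu
    have := I.mul_mem_left (↑u⁻¹ : redCstar G) _ hx
    simpa using this
  let J : Submodule ℂ (BL G) :=
    { carrier := {T | ∃ x ∈ I, (x : BL G) = T}
      zero_mem' := ⟨0, I.zero_mem, rfl⟩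
      add_mem' := by
        rintro _ _ ⟨x, hx, rfl⟩ ⟨y, hy, rfl⟩
        exact ⟨x + y, I.add_mem hx hy, rfl⟩
      smul_mem' := by
        rintro c _ ⟨x, hx, rfl⟩
        refine ⟨(c • 1) * x, I.mul_mem_left _ _ hx, ?_⟩
        simp }
  have hq : ‖(Submodule.Quotient.mk 1 : BL G ⧸ J)‖ = 1 := by
    apply le_antisymm
    · refine (Submodule.Quotient.norm_mk_le J (1 : BL G)).trans ?_
      exact ContinuousLinearMap.norm_id_le
    · refine (QuotientAddGroup.le_norm_iff (M := BL G) (S := J.toAddSubgroup)).2 fun m hm => ?_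
      have h1 : (Submodule.Quotient.mk m : BL G ⧸ J) = Submodule.Quotient.mk 1 := hm
      have h2 := (Submodule.Quotient.eq J).1 h1.symm
      obtain ⟨x, hx, hxm⟩ := h2
      have h3 := hone x hx
      have h4 : ((1 - x : redCstar G) : BL G) = m := by
        change (1 : BL G) - (x : BL G) = m
        rw [hxm]; abel
      rw [← h4]
      exact h3
  obtain ⟨φ, hφ, hφ1⟩ := exists_dual_vector'' ℂ (Submodule.Quotient.mk 1 : BL G ⧸ J)
  refine ⟨(φ : (BL G ⧸ J) →ₗ[ℂ] ℂ) ∘ₗ J.mkQ, fun T => ?_, ?_, fun x hx => ?_⟩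
  · change ‖φ (Submodule.Quotient.mk T)‖ ≤ _
    refine (φ.le_opNorm _).trans ?_
    refine (mul_le_of_le_one_left (norm_nonneg (Submodule.Quotient.mk T : BL G ⧸ J)) hφ).trans ?_
    exact Submodule.Quotient.norm_mk_le J T
  · change φ (Submodule.Quotient.mk 1) = 1
    rw [hφ1, hq]; simp
  · change φ (Submodule.Quotient.mk (x : BL G)) = 0
    rw [(Submodule.Quotient.mk_eq_zero J).2 ⟨x, hx, rfl⟩, map_zero]

theorem sep_nhds {X : Type*} [TopologicalSpace X] [T2Space X] [MulAction G X]
    [ContinuousConstSMul G X] (T : Finset G) (w : X) (hw : ∀ t ∈ T, t • w ≠ w) :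
    ∃ U ∈ nhds w, ∀ t ∈ T, ∀ x ∈ U, t • x ∉ U := by
  have h1 : ∀ t ∈ T, ∃ U ∈ nhds w, ∀ x ∈ U, t • x ∉ U := by
    intro t ht
    obtain ⟨A, B, hA, hB, hAw, hBw, hd⟩ := t2_separation (hw t ht)
    refine ⟨B ∩ (fun x => t • x) ⁻¹' A, Filter.inter_mem (hB.mem_nhds hBw)
      ((continuous_const_smul t).continuousAt.preimage_mem_nhds (hA.mem_nhds hAw)), ?_⟩
    rintro x ⟨_, hx⟩ ⟨h2, _⟩
    exact Set.disjoint_left.1 hd hx h2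
  choose! U hU hUt using h1
  refine ⟨⋂ t ∈ T, U t, (Filter.biInter_finset_mem T).2 hU, fun t ht x hx hx' => ?_⟩
  simp only [Set.mem_iInter] at hx hx'
  exact hUt t ht x (hx t ht) (hx' t ht)

theorem single_inner_perm [DecidableEq G] (g t : G) :
    inner ℂ (lp.single 2 g (1 : ℂ) : ℓ²(G, ℂ)) ((perm t : BL G) (lp.single 2 g 1)) =
      if t = 1 then 1 else 0 := by
  rw [perm_single, lp.inner_single_left, lp.single_apply]
  simp [Pi.single_apply, eq_comm]

theorem notsimple_F {X : Type*} [TopologicalSpace X] [CompactSpace X] [T2Space X] [MulAction G X]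
    [ContinuousConstSMul G X] [Nonempty X] (hSP : SPr G X) (hns : ¬ IsCstarSimple G) :
    ∃ F : Finset G, (1 : G) ∉ F ∧ ∀ x : X, ∃ t ∈ F, t • x = x := by
  classical
  unfold IsCstarSimple at hns
  push Not at hns
  obtain ⟨I, _, hbot, htop⟩ := hns
  obtain ⟨ψ, hψ, hψ1, hψI⟩ := exists_state_of_ideal I htop
  obtain ⟨a, haI, ha0⟩ : ∃ a ∈ I, a ≠ 0 := by
    by_contra hcon
    push Not at hcon
    apply hbot
    rw [eq_bot_iff]
    intro x hx
    rw [hcon x hx]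
    exact TwoSidedIdeal.zero_mem _
  obtain ⟨g0, hg0⟩ : ∃ g0 : G, (a : BL G) (lp.single 2 g0 1) ≠ 0 := by
    by_contra hcon
    push Not at hcon
    apply ha0
    apply Subtype.ext
    refine lp.ext_continuousLinearMap (by norm_num) fun i => ?_
    ext
    simpa using! congrArg (fun v : ℓ²(G, ℂ) => v _) (hcon i)
  set e0 : ℓ²(G, ℂ) := lp.single 2 g0 1 with he0
  have he0n : ‖e0‖ = 1 := by rw [he0, lp.norm_single (by norm_num)]; simp
  have hbI : star a * a ∈ I := I.mul_mem_left _ _ haI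
  set b : redCstar G := star a * a with hb
  set η : ℝ := ‖(a : BL G) e0‖ ^ 2 with hη
  have hη0 : 0 < η := by have := norm_pos_iff.2 hg0; positivity
  have hτb : inner ℂ e0 ((b : BL G) e0) = (η : ℂ) := by
    change inner ℂ e0 ((star (a : BL G)) ((a : BL G) e0)) = _
    rw [ContinuousLinearMap.star_eq_adjoint, ContinuousLinearMap.adjoint_inner_right,
      inner_self_eq_norm_sq_to_K]
    simp [hη]
  obtain ⟨c, hc⟩ := red_approx b.2 (ε := η / 4) (by positivity)
  set p : BL G := c.sum fun t z => z • (perm t : BL G) with hp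
  have hτp : inner ℂ e0 (p e0) = c 1 := by
    rw [hp, Finsupp.sum, ContinuousLinearMap.sum_apply, inner_sum]
    simp only [ContinuousLinearMap.smul_apply, inner_smul_right, he0, single_inner_perm]
    simp
    exact fun h => h.symm
  have hc1 : ‖(η : ℂ) - c 1‖ < η / 4 := by
    rw [← hτb, ← hτp, ← inner_sub_right]
    have h1 := norm_inner_le_norm (𝕜 := ℂ) e0 (((b : BL G) - p) e0)
    have h2 := ((b : BL G) - p).le_opNorm e0
    rw [he0n, mul_one] at h2
    rw [he0n, one_mul] at h1
    exact (h1.trans h2).trans_lt hc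
  refine ⟨c.support.erase 1, by simp, ?_⟩
  by_contra hcon
  push Not at hcon
  obtain ⟨w, hw⟩ := hcon
  obtain ⟨U, hU, hUt⟩ := sep_nhds _ w hw
  obtain ⟨h, hhw, hh0, hh1, hhU⟩ := bump w hU
  obtain ⟨x0⟩ := ‹Nonempty X›
  set o : G → X := fun y => y • x0 with ho
  set C : ℝ := (∑ t ∈ c.support, ‖c t‖) + 1 with hC
  have hC0 : 0 < C := by positivity
  set δ : ℝ := (η / (8 * C)) ^ 2 / 2 with hδ
  have hδ0 : 0 < δ := by positivity
  have hsq : √(2 * δ) = η / (8 * C) := by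
    rw [hδ, mul_div_cancel₀ _ (by norm_num), Real.sqrt_sq (by positivity)]
  obtain ⟨g, ψ', hψ', hψh, hψg⟩ := exists_push hSP o (fun g y => mul_smul g y x0) ψ hψ hψ1 h w hhw
    hδ0
  have hψ'1 : ψ' 1 = 1 := by
    rw [hψg, mul_one, ← perm_mul, inv_mul_cancel, perm_one, hψ1]
  have hψ'b : ψ' b = 0 := by
    rw [hψg]
    exact hψI (⟨perm g⁻¹, perm_mem_red _⟩ * b * ⟨perm g, perm_mem_red _⟩)
      (I.mul_mem_right _ _ (I.mul_mem_left _ _ hbI))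
  have hsmall : ∀ t ∈ c.support.erase 1, ‖ψ' (perm t)‖ ≤ 2 * (η / (8 * C)) := by
    intro t ht
    have hz : mulop o h * perm t * mulop o h = 0 := by
      ext f y
      change (h (o y) : ℂ) * ((h (o (t⁻¹ • y)) : ℂ) * f (t⁻¹ • y)) = 0
      have hoy : o y = t • o (t⁻¹ • y) := by simp [ho, smul_smul]
      by_cases hy : o (t⁻¹ • y) ∈ U
      · have := hUt t ht _ hy
        rw [← hoy] at this
        rw [hhU _ this]; simp
      · rw [hhU _ hy]; simp
    have hsum : mulop o h + mulop o (1 - h) = 1 := by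
      rw [← mulop_add, add_sub_cancel, mulop_one]
    have hdec : (perm t : BL G) = mulop o (1 - h) * perm t
        + (mulop o h * perm t) * mulop o (1 - h) := by
      calc (perm t : BL G) = (mulop o h + mulop o (1 - h)) * perm t := by rw [hsum, one_mul]
        _ = mulop o (1 - h) * perm t + (mulop o h * perm t) * 1 := by
          rw [add_mul, mul_one, add_comm]
        _ = mulop o (1 - h) * perm t
            + (mulop o h * perm t) * (mulop o h + mulop o (1 - h)) := by rw [hsum]
        _ = _ := by rw [mul_add, hz, zero_add]
    have hn : ‖mulop o h * (perm t : BL G)‖ ≤ 1 := by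
      refine (norm_mul_le _ _).trans ?_
      refine mul_le_one₀ ((mulop_norm o h).trans ?_) (norm_nonneg _) (perm_norm t)
      rw [ContinuousMap.norm_le _ zero_le_one]
      intro x
      rw [Real.norm_of_nonneg (hh0 x)]
      exact hh1 x
    have k1 := small_left o h hh0 hh1 ψ' hψ' (perm t) (perm_norm t) hδ0 hψh
    have k2 := small_right o h hh0 hh1 ψ' hψ' _ hn hδ0 hψh
    rw [hsq] at k1 k2
    rw [hdec, map_add]
    refine (norm_add_le _ _).trans ?_
    linarith
  have hψp : ‖ψ' p‖ < η / 4 := by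
    have := hψ' ((b : BL G) - p)
    rw [map_sub, hψ'b, zero_sub, norm_neg] at this
    exact this.trans_lt hc
  have hψp2 : ψ' p = c 1 + ∑ t ∈ c.support.erase 1, c t * ψ' (perm t) := by
    have : p = ∑ t ∈ insert 1 (c.support.erase 1), c t • (perm t : BL G) := by
      rw [hp, Finsupp.sum]
      refine Finset.sum_subset (fun t ht => ?_) fun t _ ht => ?_
      · simp only [Finset.mem_insert, Finset.mem_erase]
        tauto
      · rw [Finsupp.notMem_support_iff.1 ht, zero_smul]
    rw [this, Finset.sum_insert (by simp), map_add, map_smul, perm_one, hψ'1, map_sum]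
    simp
  have hrest : ‖∑ t ∈ c.support.erase 1, c t * ψ' (perm t)‖ ≤ η / 4 := by
    calc _ ≤ ∑ t ∈ c.support.erase 1, ‖c t‖ * (2 * (η / (8 * C))) := by
          refine (norm_sum_le _ _).trans (Finset.sum_le_sum fun t ht => ?_)
          rw [norm_mul]
          gcongr
          exact hsmall t ht
      _ ≤ C * (2 * (η / (8 * C))) := by
          rw [← Finset.sum_mul]
          gcongr
          have : ∑ t ∈ c.support.erase 1, ‖c t‖ ≤ ∑ t ∈ c.support, ‖c t‖ :=
            Finset.sum_le_sum_of_subset_of_nonneg (Finset.erase_subset _ _)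
              (fun _ _ _ => norm_nonneg _)
          linarith
      _ = η / 4 := by field_simp; norm_num
  have hfin : ‖(η : ℂ)‖ ≤ ‖(η : ℂ) - c 1‖ + ‖ψ' p‖
      + ‖∑ t ∈ c.support.erase 1, c t * ψ' (perm t)‖ := by
    have : (η : ℂ) = ((η : ℂ) - c 1) + ψ' p - ∑ t ∈ c.support.erase 1, c t * ψ' (perm t) := by
      rw [hψp2]; ring
    conv_lhs => rw [this]
    refine (norm_sub_le _ _).trans ?_
    gcongr
    exact norm_add_le _ _
  rw [Complex.norm_real, Real.norm_of_nonneg hη0.le] at hfin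
  linarith


section Dyn5
variable {X : Type*} [TopologicalSpace X] [CompactSpace X] [T2Space X]
  [MulAction G X] [ContinuousConstSMul G X]

theorem fix_of_amen [Nonempty X] (hSP : SPr G X) {H : Subgroup G} (ham : IsAmenable H)
    (F : Finset G) (hF : ∀ g, ∃ t ∈ F, t ∈ conjSub g H) (w : X) : ∃ t ∈ F, t • w = w := by
  by_contra hcon
  push Not at hcon
  obtain ⟨U, hU, hsep⟩ := sep_nhds F w hcon
  obtain ⟨h, hw, h0, h1, hout⟩ := bump w hU
  obtain ⟨m, m1, mpos, minv⟩ := ham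
  obtain ⟨y⟩ := ‹Nonempty X›
  let ob : C(X, ℝ) → lp (fun _ : H => ℝ) ∞ := fun k => ⟨fun j => k ((j : G) • y), by
    apply memℓp_infty
    refine ⟨‖k‖, ?_⟩
    rintro _ ⟨j, rfl⟩
    exact k.norm_coe_le_norm _⟩
  let ν : C(X, ℝ) → ℝ := fun k => m (ob k)
  have hν : ν ∈ StX X := by
    refine ⟨fun a b => ?_, fun c a => ?_, fun a ha => ?_, ?_⟩
    · exact m.map_add (ob a) (ob b)
    · exact m.map_smul c (ob a)
    · exact mpos _ fun k => ha _
    · exact m1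
  have hinv : ∀ (s : G) (hs : s ∈ H) k, ν (transX s k) = ν k := by
    intro s hs k
    have : ob (transX s k) = translInfty (⟨s, hs⟩⁻¹ : H) (ob k) := by
      ext j
      rw [translInfty_apply, inv_inv]
      change k (s • (j : G) • y) = k ((s * j) • y)
      rw [mul_smul]
    change m _ = m _
    rw [this, minv]
  obtain ⟨g, hg⟩ := hSP ν hν h w (1/2) (by norm_num)
  obtain ⟨t, htF, ht⟩ := hF g
  have hs := mem_conjSub.1 ht
  have e1 := hinv _ hs (transX g h)
  have e2 : transX (g⁻¹ * t * g) (transX g h) = transX (t * g) h := by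
    ext x
    change h (g • (g⁻¹ * t * g) • x) = h ((t * g) • x)
    rw [← mul_smul]; congr 2; group
  rw [e2] at e1
  have e3 : ν (transX g h + transX (t * g) h) ≤ ν 1 := by
    refine StX.mono hν fun x => ?_
    change h (g • x) + h ((t * g) • x) ≤ 1
    rw [mul_smul]
    by_cases hx : g • x ∈ U
    · have := hout _ (hsep t htF _ hx)
      have := h1 (g • x)
      linarith
    · have := hout _ hx
      have := h1 (t • g • x)
      linarith
  rw [hν.1, e1, hν.2.2.2] at e3
  rw [hw] at hg
  linarith

theorem exists_int_fix [Nonempty X] (hSP : SPr G X) {H : Subgroup G} (ham : IsAmenable H)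
    (hrec : IsRecurrent H) : ∃ (t : G) (w : X), t ≠ 1 ∧ {x : X | t • x = x} ∈ nhds w := by
  obtain ⟨F, hF1, hF⟩ := F_of_rec hrec
  have hfix := fix_of_amen hSP ham F hF
  obtain ⟨t, w, hw⟩ := nonempty_interior_of_iUnion_of_closed
    (f := fun t : F => {x : X | (t : G) • x = x})
    (fun t => isClosed_eq (continuous_const_smul _) continuous_id) (by
      ext x
      simp only [Set.mem_iUnion, Set.mem_setOf_eq, Set.mem_univ, iff_true]
      obtain ⟨t, ht, h⟩ := hfix x
      exact ⟨⟨t, ht⟩, h⟩)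
  exact ⟨t, w, fun h => hF1 (h ▸ t.2), mem_interior_iff_mem_nhds.1 hw⟩

end Dyn5


section Reiter

theorem mem_l1 {S : Type*} (f : S →₀ ℝ) : Memℓp (fun i => f i) 1 := by
  apply memℓp_gen
  refine summable_of_finite_support (f.finite_support.subset ?_)
  intro i hi
  simp only [Function.mem_support] at hi ⊢
  intro h0
  apply hi
  rw [h0]; simp

def toL1 (S : Type*) : (S →₀ ℝ) →ₗ[ℝ] lp (fun _ : S => ℝ) 1 where
  toFun f := ⟨fun i => f i, mem_l1 f⟩
  map_add' f g := by ext i; rfl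
  map_smul' c f := by ext i; rfl

theorem toL1_apply {S : Type*} (f : S →₀ ℝ) (i : S) : toL1 S f i = f i := rfl

theorem norm_l1 {S : Type*} (f : lp (fun _ : S => ℝ) 1) : ‖f‖ = ∑' i, |f i| := by
  rw [lp.norm_eq_tsum_rpow (by norm_num) f]
  simp

theorem toL1_single_norm {S : Type*} (k : S) : ‖toL1 S (Finsupp.single k 1)‖ ≤ 1 := by
  classical
  rw [norm_l1, tsum_eq_single k]
  · rw [toL1_apply]; simp
  · intro b hb
    rw [toL1_apply]; simp [Finsupp.single_apply, Ne.symm hb]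

theorem reiter {S : Type*} [Group S] (ham : IsAmenable S) (E : Finset S) {ε : ℝ} (hε : 0 < ε) :
    ∃ f : S →₀ ℝ, (∀ x, 0 ≤ f x) ∧ (f.sum fun _ a => a) = 1 ∧
      ∀ h ∈ E, ∑' x, |f x - f (h⁻¹ * x)| < ε := by
  classical
  obtain ⟨m, m1, mpos, minv⟩ := ham
  let Φ : (S →₀ ℝ) →ₗ[ℝ] (E → lp (fun _ : S => ℝ) 1) := LinearMap.pi fun h =>
    toL1 S - toL1 S ∘ₗ Finsupp.lmapDomain ℝ ℝ (fun x => (h : S) * x)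
  let K : Set (S →₀ ℝ) := {f | (∀ x, 0 ≤ f x) ∧ (f.sum fun _ a => a) = 1}
  have hKc : Convex ℝ K := by
    intro f hf g hg a b ha hb hab
    refine ⟨fun x => ?_, ?_⟩
    · have := hf.1 x; have := hg.1 x
      simp only [Finsupp.add_apply, Finsupp.smul_apply, smul_eq_mul]
      positivity
    · rw [Finsupp.sum_add_index' (fun _ => rfl) (fun _ _ _ => rfl),
        Finsupp.sum_smul_index (fun _ => rfl), Finsupp.sum_smul_index (fun _ => rfl),
        ← Finsupp.mul_sum, ← Finsupp.mul_sum, hf.2, hg.2, mul_one, mul_one, hab]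
  by_cases h0 : (0 : E → lp (fun _ : S => ℝ) 1) ∈ closure (Φ '' K)
  · obtain ⟨_, ⟨f, hf, rfl⟩, hd⟩ := Metric.mem_closure_iff.1 h0 ε hε
    refine ⟨f, hf.1, hf.2, fun h hh => ?_⟩
    rw [dist_comm, dist_zero_right] at hd
    have h1 := (norm_le_pi_norm (Φ f) ⟨h, hh⟩).trans_lt hd
    rw [norm_l1] at h1
    refine lt_of_eq_of_lt (tsum_congr fun x => ?_) h1
    congr 1
    change f x - _ = f x - (Finsupp.mapDomain (fun x => h * x) f) x
    congr 1
    have := Finsupp.mapDomain_equiv_apply (f := Equiv.mulLeft h) f x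
    exact this.symm
  · exfalso
    obtain ⟨φ, u, hu0, hu⟩ := geometric_hahn_banach_point_closed
      (hKc.linear_image Φ).closure isClosed_closure h0
    rw [map_zero] at hu0
    let v : E → S → ℝ := fun h k => φ (Pi.single h (toL1 S (Finsupp.single k 1)))
    have hv : ∀ h k, ‖v h k‖ ≤ ‖φ‖ := by
      intro h k
      refine (φ.le_opNorm _).trans ?_
      rw [Pi.norm_single]
      have := toL1_single_norm k
      have h2 := norm_nonneg φ
      nlinarith
    let V : E → lp (fun _ : S => ℝ) ∞ := fun h => ⟨v h, by
      apply memℓp_infty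
      refine ⟨‖φ‖, ?_⟩
      rintro _ ⟨k, rfl⟩
      exact hv h k⟩
    let U : lp (fun _ : S => ℝ) ∞ := ∑ h : E, (V h - translInfty (h : S)⁻¹ (V h))
    have hmU : m U = 0 := by
      change m (∑ h : E, (V h - translInfty (h : S)⁻¹ (V h))) = 0
      rw [map_sum]
      refine Finset.sum_eq_zero fun h _ => ?_
      rw [map_sub, minv, sub_self]
    have hU : ∀ k, u < U k := by
      intro k
      have h1 := hu (Φ (Finsupp.single k 1)) (subset_closure ⟨_, ⟨fun x => ?_, ?_⟩, rfl⟩)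
      · have h2 : U k = φ (Φ (Finsupp.single k 1)) := by
          have h3 : Φ (Finsupp.single k 1) = ∑ h : E, (Pi.single h (toL1 S (Finsupp.single k 1))
              - Pi.single h (toL1 S (Finsupp.single (h * k) 1))) := by
            rw [← Finset.univ_sum_single (Φ (Finsupp.single k 1))]
            refine Finset.sum_congr rfl fun h _ => ?_
            rw [← Pi.single_sub]
            congr 1
            change toL1 S _ - toL1 S (Finsupp.mapDomain _ _) = _
            rw [Finsupp.mapDomain_single]
          rw [h3, map_sum]
          have h4 : (U : S → ℝ) = ∑ h : E, ((V h - translInfty (h : S)⁻¹ (V h) :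
            lp (fun _ : S => ℝ) ∞) : S → ℝ) := by
            change ((∑ h : E, (V h - translInfty (h : S)⁻¹ (V h)) : lp (fun _ : S => ℝ) ∞) : S → ℝ) = _
            rw [lp.coeFn_sum]
          rw [h4, Finset.sum_apply]
          refine Finset.sum_congr rfl fun h _ => ?_
          rw [map_sub, lp.coeFn_sub, Pi.sub_apply, translInfty_apply, inv_inv]
        rw [h2]; exact h1
      · rw [Finsupp.single_apply]; split_ifs <;> norm_num
      · rw [Finsupp.sum_single_index rfl]
    have h5 : 0 ≤ m (U - u • 1) := by
      refine mpos _ fun k => ?_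
      rw [lp.coeFn_sub, Pi.sub_apply, lp.coeFn_smul, Pi.smul_apply]
      have := hU k
      have e : (1 : lp (fun _ : S => ℝ) ∞) k = 1 := rfl
      rw [e, smul_eq_mul, mul_one]
      linarith
    rw [map_sub, map_smul, m1, hmU, smul_eq_mul] at h5
    linarith

theorem reiter_l2 {S : Subgroup G} (ham : IsAmenable S) (E : Finset G) (hE : ∀ h ∈ E, h ∈ S)
    {ε : ℝ} (hε : 0 < ε) :
    ∃ ξ : ℓ²(G, ℂ), ‖ξ‖ = 1 ∧ (∀ x ∉ S, ξ x = 0) ∧ ∀ h ∈ E, ‖perm h ξ - ξ‖ < ε := by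
  classical
  obtain ⟨f, f0, f1, hf⟩ := reiter ham (E.subtype (· ∈ S)) (pow_pos hε 2)
  let r : G → ℝ := fun x => if hx : x ∈ S then Real.sqrt (f ⟨x, hx⟩) else 0
  have hr2 : ∀ x, ‖(r x : ℂ)‖ ^ 2 = if hx : x ∈ S then f ⟨x, hx⟩ else 0 := by
    intro x
    rw [Complex.norm_real, Real.norm_eq_abs, sq_abs]
    simp only [r]
    split_ifs with hx
    · exact Real.sq_sqrt (f0 _)
    · simp
  have hinj : Function.Injective (Subtype.val : S → G) := Subtype.val_injective
  have key : ∀ (p : G → ℝ), (∀ x ∉ S, p x = 0) → ∀ a : ℝ, HasSum (fun s : S => p s) a →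
      HasSum p a := by
    intro p hp a ha
    refine (hinj.hasSum_iff ?_).1 ha
    intro x hx
    apply hp
    intro hxS
    exact hx ⟨⟨x, hxS⟩, rfl⟩
  have hfs : HasSum (fun s : S => f s) 1 := by
    rw [← f1]
    exact hasSum_sum_of_ne_finset_zero (fun b hb => by simpa using hb)
  have hsum : HasSum (fun x => ‖(r x : ℂ)‖ ^ 2) 1 := by
    refine key _ (fun x hx => ?_) _ ?_
    · rw [hr2, dif_neg hx]
    · convert hfs using 2 with s
      rw [hr2, dif_pos s.2]
  let ξ : ℓ²(G, ℂ) := ⟨fun x => (r x : ℂ), l2_mem hsum.summable⟩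
  have hξ : ∀ x, ξ x = (r x : ℂ) := fun x => rfl
  refine ⟨ξ, ?_, ?_, ?_⟩
  · have := l2_norm_sq ξ
    simp only [hξ] at this
    rw [hsum.tsum_eq] at this
    nlinarith [norm_nonneg ξ]
  · intro x hx
    rw [hξ]; simp [r, hx]
  · intro h hh
    have hS := hE h hh
    have h1 := hf ⟨h, hS⟩ (by simpa using hh)
    have hsm : Summable fun x : S => |f x - f (⟨h, hS⟩⁻¹ * x)| := by
      refine Summable.abs (Summable.sub hfs.summable ?_)
      exact ((Equiv.mulLeft (⟨h, hS⟩⁻¹ : S)).summable_iff (f := fun s => f s)).2 hfs.summable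
    have h2 : ‖perm h ξ - ξ‖ ^ 2 < ε ^ 2 := by
      refine lt_of_le_of_lt ?_ h1
      rw [l2_norm_sq]
      let p : G → ℝ := fun x => ‖(perm h ξ - ξ) x‖ ^ 2
      have hp : ∀ x, p x = (r (h⁻¹ * x) - r x) ^ 2 := by
        intro x
        change ‖(perm h ξ - ξ) x‖ ^ 2 = _
        rw [lp.coeFn_sub, Pi.sub_apply, perm_apply, smul_eq_mul, hξ, hξ, ← Complex.ofReal_sub,
          Complex.norm_real, Real.norm_eq_abs, sq_abs]
      have hb : ∀ s : S, p s ≤ |f s - f (⟨h, hS⟩⁻¹ * s)| := by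
        intro s
        have hm : h⁻¹ * (s : G) ∈ S := S.mul_mem (S.inv_mem hS) s.2
        have e1 : r (h⁻¹ * s) = Real.sqrt (f (⟨h, hS⟩⁻¹ * s)) := by
          simp only [r]; rw [dif_pos hm]; rfl
        have e2 : r s = Real.sqrt (f s) := by
          simp only [r]; rw [dif_pos s.2]
        rw [hp, e1, e2]
        set a := Real.sqrt (f (⟨h, hS⟩⁻¹ * s)) with ha
        set b := Real.sqrt (f s) with hb
        have ha0 : 0 ≤ a := Real.sqrt_nonneg _
        have hb0 : 0 ≤ b := Real.sqrt_nonneg _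
        have ea : f (⟨h, hS⟩⁻¹ * s) = a ^ 2 := (Real.sq_sqrt (f0 _)).symm
        have eb : f s = b ^ 2 := (Real.sq_sqrt (f0 _)).symm
        rw [ea, eb]
        rcases le_total a b with hab | hab
        · refine le_trans ?_ (le_abs_self _); nlinarith
        · refine le_trans ?_ (neg_le_abs _); nlinarith
      have hps : Summable fun s : S => p s :=
        Summable.of_nonneg_of_le (fun s => by positivity) hb hsm
      have hpt : ∑' x, p x = ∑' s : S, p s := by
        refine (key p ?_ _ hps.hasSum).tsum_eq
        intro x hx
        have hx' : h⁻¹ * x ∉ S := by rwa [S.mul_mem_cancel_left (S.inv_mem hS)]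
        rw [hp]
        simp [r, hx, hx']
      change ∑' x, p x ≤ _
      rw [hpt]
      exact hps.tsum_le_tsum hb hsm
    exact lt_of_pow_lt_pow_left₀ 2 hε.le h2

end Reiter


section WeakCont

theorem perm_norm_apply {Y : Type*} [MulAction G Y] (g : G) (f : ℓ²(Y, ℂ)) :
    ‖(perm g : BL Y) f‖ = ‖f‖ := by
  have h : ∀ (g : G) (f : ℓ²(Y, ℂ)), ‖(perm g : BL Y) f‖ ≤ ‖f‖ := by
    intro g f
    refine ((perm g : BL Y).le_opNorm f).trans ?_
    have := perm_norm (Y := Y) g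
    have := norm_nonneg f
    nlinarith
  refine le_antisymm (h g f) ?_
  have h2 := h g⁻¹ ((perm g : BL Y) f)
  rwa [← ContinuousLinearMap.mul_apply, ← perm_mul, inv_mul_cancel, perm_one,
    ContinuousLinearMap.one_apply] at h2

theorem coset_orthonormal (S : Subgroup G) (ξ : ℓ²(G, ℂ)) (h1 : ‖ξ‖ = 1)
    (h0 : ∀ x ∉ S, ξ x = 0) :
    Orthonormal ℂ (fun y : G ⧸ S => (perm (Quotient.out y) : BL G) ξ) := by
  refine ⟨fun y => by rw [perm_norm_apply, h1], fun y y' hne => ?_⟩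
  change inner ℂ ((perm (Quotient.out y) : BL G) ξ) ((perm (Quotient.out y') : BL G) ξ) = 0
  rw [lp.inner_eq_tsum]
  have hz : ∀ (y : G ⧸ S) (x : G), (QuotientGroup.mk x : G ⧸ S) ≠ y →
      (perm (Quotient.out y) : BL G) ξ x = 0 := by
    intro y x hx
    rw [perm_apply]
    apply h0
    intro hm
    apply hx
    have : (QuotientGroup.mk (Quotient.out y) : G ⧸ S) = QuotientGroup.mk x :=
      QuotientGroup.eq.2 hm
    rw [← this]
    exact QuotientGroup.out_eq' y
  convert tsum_zero with x
  by_cases hx : (QuotientGroup.mk x : G ⧸ S) = y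
  · rw [hz y' x (fun h => hne (hx.symm.trans h)), inner_zero_right]
  · rw [hz y x hx, inner_zero_left]

theorem quasi_norm_aux {S : Subgroup G} (ham : IsAmenable S) (c : G →₀ ℂ) [DecidableEq (G ⧸ S)]
    (J : Finset (G ⧸ S)) (f : G ⧸ S → ℂ) {δ : ℝ} (hδ : 0 < δ) :
    ‖(c.sum fun t z => z • (perm t : BL (G ⧸ S))) (∑ y ∈ J, lp.single 2 y (f y))‖ ≤
      ‖c.sum fun t z => z • (perm t : BL G)‖ * ‖∑ y ∈ J, (lp.single 2 y (f y) : ℓ²(G ⧸ S, ℂ))‖ + δ := by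
  classical
  set A : BL (G ⧸ S) := c.sum fun t z => z • (perm t : BL (G ⧸ S)) with hA
  set B : BL G := c.sum fun t z => z • (perm t : BL G) with hB
  set v : ℓ²(G ⧸ S, ℂ) := ∑ y ∈ J, lp.single 2 y (f y) with hv
  set M : ℝ := ∑ t ∈ c.support, ‖c t‖ * ∑ y ∈ J, ‖f y‖ with hM
  have hM0 : 0 ≤ M := by positivity
  set ε : ℝ := δ / (M + 1) with hε
  have hε0 : 0 < ε := by positivity
  let s : G → G ⧸ S → G := fun t y => (Quotient.out (t • y))⁻¹ * (t * Quotient.out y)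
  have hs : ∀ t y, s t y ∈ S := by
    intro t y
    refine QuotientGroup.eq.1 ?_
    have e1 : (QuotientGroup.mk (Quotient.out (t • y)) : G ⧸ S) = t • y :=
      QuotientGroup.out_eq' _
    have e2 : (QuotientGroup.mk (Quotient.out y) : G ⧸ S) = y := QuotientGroup.out_eq' _
    rw [e1]
    conv_lhs => rw [← e2]
    rfl
  obtain ⟨ξ, hξ1, hξ0, hξ⟩ := reiter_l2 ham ((c.support ×ˢ J).image fun p => s p.1 p.2) (by
    intro h hh
    obtain ⟨p, _, rfl⟩ := Finset.mem_image.1 hh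
    exact hs _ _) hε0
  have hon := coset_orthonormal S ξ hξ1 hξ0
  let V : ℓ²(G ⧸ S, ℂ) →ₗᵢ[ℂ] ℓ²(G, ℂ) := hon.orthogonalFamily.linearIsometry
  have hV : ∀ (y : G ⧸ S) (z : ℂ), V (lp.single 2 y z) = z • (perm (Quotient.out y) : BL G) ξ := by
    intro y z
    rw [hon.orthogonalFamily.linearIsometry_apply_single]
    rfl
  have hd : ∀ t ∈ c.support, ∀ y ∈ J, ∀ z : ℂ, ‖V ((perm t : BL (G ⧸ S)) (lp.single 2 y z)) -
      (perm t : BL G) (V (lp.single 2 y z))‖ ≤ ‖z‖ * ε := by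
    intro t ht y hy z
    rw [perm_single, hV, hV, map_smul, ← smul_sub, norm_smul]
    refine mul_le_mul_of_nonneg_left ?_ (norm_nonneg _)
    have e : (perm t : BL G) ((perm (Quotient.out y) : BL G) ξ) =
        (perm (Quotient.out (t • y)) : BL G) ((perm (s t y) : BL G) ξ) := by
      rw [← ContinuousLinearMap.mul_apply, ← ContinuousLinearMap.mul_apply, ← perm_mul, ← perm_mul]
      congr 2
      simp [s]
    rw [e, ← map_sub, perm_norm_apply, ← norm_neg, neg_sub]
    exact (hξ _ (Finset.mem_image.2 ⟨(t, y), Finset.mem_product.2 ⟨ht, hy⟩, rfl⟩)).le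
  have hD : ‖V (A v) - B (V v)‖ ≤ M * ε := by
    have e1 : V (A v) - B (V v) = ∑ t ∈ c.support, c t • ∑ y ∈ J,
        (V ((perm t : BL (G ⧸ S)) (lp.single 2 y (f y))) -
          (perm t : BL G) (V (lp.single 2 y (f y)))) := by
      rw [hA, hB, Finsupp.sum, Finsupp.sum, ContinuousLinearMap.sum_apply,
        ContinuousLinearMap.sum_apply, map_sum, ← Finset.sum_sub_distrib]
      refine Finset.sum_congr rfl fun t _ => ?_
      rw [ContinuousLinearMap.smul_apply, ContinuousLinearMap.smul_apply, map_smul, ← smul_sub, hv,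
        map_sum, map_sum, map_sum, map_sum, ← Finset.sum_sub_distrib]
    rw [e1, hM, Finset.sum_mul]
    refine norm_sum_le_of_le _ fun t ht => ?_
    rw [norm_smul, mul_assoc, Finset.sum_mul]
    refine mul_le_mul_of_nonneg_left ?_ (norm_nonneg _)
    exact norm_sum_le_of_le _ fun y hy => hd t ht y hy _
  have hMδ : M * ε ≤ δ := by
    rw [hε, mul_div_assoc', div_le_iff₀ (by positivity)]
    nlinarith
  calc ‖A v‖ = ‖V (A v)‖ := (V.norm_map _).symm
    _ = ‖B (V v) + (V (A v) - B (V v))‖ := by rw [add_sub_cancel]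
    _ ≤ ‖B (V v)‖ + ‖V (A v) - B (V v)‖ := norm_add_le _ _
    _ ≤ ‖B‖ * ‖V v‖ + δ := add_le_add (B.le_opNorm _) (hD.trans hMδ)
    _ = ‖B‖ * ‖v‖ + δ := by rw [V.norm_map]

theorem quasi_norm_le {S : Subgroup G} (ham : IsAmenable S) (c : G →₀ ℂ) :
    ‖c.sum fun t z => z • (perm t : BL (G ⧸ S))‖ ≤ ‖c.sum fun t z => z • (perm t : BL G)‖ := by
  classical
  refine ContinuousLinearMap.opNorm_le_bound _ (norm_nonneg _) fun f => ?_
  have hs := lp.hasSum_single (p := 2) (by norm_num) f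
  have h1 := (((c.sum fun t z => z • (perm t : BL (G ⧸ S))).continuous.norm.tendsto f).comp hs)
  have h2 := ((continuous_norm.tendsto f).comp hs).const_mul ‖c.sum fun t z => z • (perm t : BL G)‖
  refine le_of_tendsto_of_tendsto h1 h2 (Filter.Eventually.of_forall fun J => ?_)
  exact le_of_forall_pos_le_add fun δ hδ => quasi_norm_aux ham c J f hδ

end WeakCont


section Simple

theorem snd_isometric {A B : Type*} [CStarAlgebra A] [CStarAlgebra B]
    (D : StarSubalgebra ℂ (A × B)) (hD : IsClosed (D : Set (A × B)))
    (hinj : ∀ a : A, (a, (0 : B)) ∈ D → a = 0) {d : A × B} (hd : d ∈ D) : ‖d.1‖ ≤ ‖d.2‖ := by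
  haveI : IsClosed (D : Set (A × B)) := hD
  let φ : D →⋆ₐ[ℂ] B := (StarAlgHom.snd ℂ A B).comp D.subtype
  have hφ : Function.Injective φ := by
    rw [injective_iff_map_eq_zero]
    rintro ⟨⟨a, b⟩, hab⟩ h
    change b = 0 at h
    subst h
    have := hinj a hab
    subst this
    rfl
  have h := NonUnitalStarAlgHom.norm_map φ hφ ⟨d, hd⟩
  change ‖d.2‖ = ‖d‖ at h
  rw [h]
  exact norm_fst_le d

theorem simple_norm_le {Y : Type*} [MulAction G Y] [Nonempty Y] (hs : IsCstarSimple G)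
    (hle : ∀ c : G →₀ ℂ, ‖c.sum fun t z => z • (perm t : BL Y)‖ ≤
      ‖c.sum fun t z => z • (perm t : BL G)‖) (c : G →₀ ℂ) :
    ‖c.sum fun t z => z • (perm t : BL G)‖ ≤ ‖c.sum fun t z => z • (perm t : BL Y)‖ := by
  classical
  let u : G → BL G × BL Y := fun g => (perm g, perm g)
  have um : ∀ g h, u (g * h) = u g * u h := fun g h => by
    simp only [u, perm_mul, Prod.mk_mul_mk]
  have u1 : u 1 = 1 := by
    simp only [u, perm_one]; rfl
  have us : ∀ g, star (u g) = u g⁻¹ := fun g => by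
    change (star (perm g : BL G), star (perm g : BL Y)) = _
    rw [perm_star, perm_star]
  let D0 : StarSubalgebra ℂ (BL G × BL Y) := StarAlgebra.adjoin ℂ (Set.range u)
  let D : StarSubalgebra ℂ (BL G × BL Y) := D0.topologicalClosure
  have hDc : IsClosed (D : Set (BL G × BL Y)) := D0.isClosed_topologicalClosure
  have hu : ∀ c : G →₀ ℂ, (c.sum fun t z => z • u t) = (c.sum fun t z => z • (perm t : BL G),
      c.sum fun t z => z • (perm t : BL Y)) := by
    intro c
    simp only [Finsupp.sum]
    ext1
    · rw [Prod.fst_sum]; rfl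
    · rw [Prod.snd_sum]; rfl
  have humem : ∀ c : G →₀ ℂ, (c.sum fun t z => z • u t) ∈ D := by
    intro c
    refine StarSubalgebra.le_topologicalClosure _ ?_
    exact sum_mem fun t _ => D0.smul_mem (StarAlgebra.subset_adjoin ℂ _ ⟨t, rfl⟩) _
  have hD0 : ∀ d ∈ D0, ∃ c : G →₀ ℂ, d = (c.sum fun t z => z • (perm t : BL G),
      c.sum fun t z => z • (perm t : BL Y)) := by
    intro d hd
    obtain ⟨c, rfl⟩ := adjoin_group_span u um u1 us hd
    exact ⟨c, hu c⟩
  have hDle : ∀ d ∈ D, ‖d.2‖ ≤ ‖d.1‖ := by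
    intro d hd
    have : closure (D0 : Set (BL G × BL Y)) ⊆ {d | ‖d.2‖ ≤ ‖d.1‖} := by
      refine closure_minimal ?_ (isClosed_le (by fun_prop) (by fun_prop))
      intro d hd
      obtain ⟨c, rfl⟩ := hD0 d hd
      exact hle c
    exact this hd
  have hDred : ∀ d ∈ D, d.1 ∈ redCstar G := by
    intro d hd
    have : closure (D0 : Set (BL G × BL Y)) ⊆ {d | d.1 ∈ (redCstar G : Set (BL G))} := by
      refine closure_minimal ?_ (redCstar_isClosed.preimage continuous_fst)
      intro d hd
      obtain ⟨c, rfl⟩ := hD0 d hd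
      exact sum_mem fun t _ => (redCstar G).smul_mem (perm_mem_red t) _
    exact this hd
  have hmul : ∀ (x a : BL G), x ∈ redCstar G → (a, (0 : BL Y)) ∈ D →
      (x * a, (0 : BL Y)) ∈ D ∧ (a * x, (0 : BL Y)) ∈ D := by
    intro x a hx ha
    have : closure (StarAlgebra.adjoin ℂ (Set.range (fun g : G => (perm g : BL G))) : Set (BL G)) ⊆
        {x | (x * a, (0 : BL Y)) ∈ (D : Set (BL G × BL Y))} ∩
          {x | (a * x, (0 : BL Y)) ∈ (D : Set (BL G × BL Y))} := by
      refine closure_minimal ?_ ((hDc.preimage (by fun_prop)).inter (hDc.preimage (by fun_prop)))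
      intro x hx
      obtain ⟨c, rfl⟩ := adjoin_group_span (fun g : G => (perm g : BL G)) perm_mul perm_one
        perm_star hx
      have h1 := humem c
      rw [hu] at h1
      constructor
      · have := D.mul_mem h1 ha
        rwa [Prod.mk_mul_mk, mul_zero] at this
      · have := D.mul_mem ha h1
        rwa [Prod.mk_mul_mk, zero_mul] at this
    rw [redCstar_eq] at hx
    exact this hx
  let I : TwoSidedIdeal (redCstar G) := TwoSidedIdeal.mk'
    {a : redCstar G | ((a : BL G), (0 : BL Y)) ∈ D} D.zero_mem
    (fun {x y} hx hy => by
      have := D.add_mem hx hy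
      rwa [Prod.mk_add_mk, add_zero] at this)
    (fun {x} hx => by
      have := D.neg_mem hx
      rwa [Prod.neg_mk, neg_zero] at this)
    (fun {x y} hy => (hmul x y x.2 hy).1)
    (fun {x y} hx => (hmul y x y.2 hx).2)
  have hI : ∀ a : redCstar G, a ∈ I ↔ ((a : BL G), (0 : BL Y)) ∈ D := fun a =>
    TwoSidedIdeal.mem_mk' _ _ _ _ _ _ _
  have hIc : IsClosed (I : Set (redCstar G)) := by
    have e : (I : Set (redCstar G)) = (fun a : redCstar G => ((a : BL G), (0 : BL Y))) ⁻¹'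
        (D : Set (BL G × BL Y)) := by
      ext a; exact hI a
    rw [e]
    exact hDc.preimage (by fun_prop)
  have hbot : I = ⊥ := by
    refine (hs I hIc).resolve_right fun htop => ?_
    have h1 := (hI 1).1 ((TwoSidedIdeal.one_mem_iff I).2 htop)
    have h2 := D.sub_mem D.one_mem h1
    have h3 := hDle _ h2
    change ‖(1 : BL Y) - 0‖ ≤ ‖(1 : BL G) - 1‖ at h3
    rw [sub_zero, sub_self, norm_zero] at h3
    have h4 : (1 : BL Y) = 0 := norm_le_zero_iff.1 h3
    obtain ⟨y⟩ := ‹Nonempty Y›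
    have h5 := congrArg (fun T : BL Y => T (lp.single 2 y 1) y) h4
    simp at h5
  have hfin := snd_isometric D hDc (fun a ha => by
    have h1 : (⟨a, hDred _ ha⟩ : redCstar G) ∈ I := (hI _).2 ha
    rw [hbot, TwoSidedIdeal.mem_bot] at h1
    exact congrArg Subtype.val h1) (humem c)
  rw [hu] at hfin
  exact hfin

end Simple


section Final

theorem coeff_one_le (c : G →₀ ℂ) : ‖c 1‖ ≤ ‖c.sum fun t z => z • (perm t : BL G)‖ := by
  classical
  set B : BL G := c.sum fun t z => z • (perm t : BL G) with hB
  let e : ℓ²(G, ℂ) := lp.single 2 1 (1 : ℂ)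
  have he : ‖e‖ = 1 := by
    change ‖(lp.single 2 1 (1 : ℂ) : ℓ²(G, ℂ))‖ = 1
    rw [lp.norm_single (by norm_num)]; simp
  have h1 : inner ℂ e (B e) = c 1 := by
    rw [hB, Finsupp.sum, ContinuousLinearMap.sum_apply, inner_sum]
    have : ∀ t ∈ c.support, inner ℂ e ((c t • (perm t : BL G)) e) = if t = 1 then c t else 0 := by
      intro t _
      rw [ContinuousLinearMap.smul_apply, inner_smul_right, single_inner_perm]
      simp
    rw [Finset.sum_congr rfl this, Finset.sum_ite_eq']
    split_ifs with h
    · rfl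
    · exact (Finsupp.notMem_support_iff.1 h).symm
  rw [← h1]
  refine (norm_inner_le_norm _ _).trans ?_
  rw [he, one_mul]
  refine (B.le_opNorm _).trans ?_
  rw [he, mul_one]

theorem extend_along {V E : Type*} [AddCommGroup V] [Module ℂ V] [NormedAddCommGroup E]
    [NormedSpace ℂ E] (L : V →ₗ[ℂ] E) (l : V →ₗ[ℂ] ℂ) (hL : ∀ c, ‖l c‖ ≤ ‖L c‖) :
    ∃ g : E →L[ℂ] ℂ, ‖g‖ ≤ 1 ∧ ∀ c, g (L c) = l c := by
  let p := LinearMap.range L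
  have hr : ∀ x : p, ∃ c, L c = x := fun x => x.2
  choose r hr using hr
  have hrL : ∀ (x : p) c, L c = x → l (r x) = l c := by
    intro x c hc
    have h := hL (r x - c)
    rw [map_sub, map_sub, hr, hc, sub_self, norm_zero] at h
    have h2 := norm_le_zero_iff.1 h
    exact sub_eq_zero.1 h2
  let f0 : p →ₗ[ℂ] ℂ :=
    { toFun := fun x => l (r x)
      map_add' := fun x y => by
        rw [hrL (x + y) (r x + r y) (by rw [map_add, hr, hr]; rfl), map_add]
      map_smul' := fun a x => by
        rw [hrL (a • x) (a • r x) (by rw [map_smul, hr]; rfl), map_smul]; rfl }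
  have hf0 : ∀ x, ‖f0 x‖ ≤ 1 * ‖x‖ := by
    intro x
    rw [one_mul]
    have := hL (r x)
    rw [hr] at this
    exact this
  let f : StrongDual ℂ p := f0.mkContinuous 1 hf0
  have hf : ‖f‖ ≤ 1 := f0.mkContinuous_norm_le zero_le_one _
  obtain ⟨g, hg, hgn⟩ := exists_extension_norm_eq p f
  have hgL : ∀ c, g (L c) = l c := by
    intro c
    have := hg ⟨L c, c, rfl⟩
    rw [this]
    exact hrL _ c rfl
  exact ⟨g, hgn.trans_le hf, hgL⟩

theorem exists_trace_ext {Y : Type*} [MulAction G Y]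
    (hle : ∀ c : G →₀ ℂ, ‖c 1‖ ≤ ‖c.sum fun t z => z • (perm t : BL Y)‖) :
    ∃ ψ : BL Y →ₗ[ℂ] ℂ, (∀ T, ‖ψ T‖ ≤ ‖T‖) ∧ ψ 1 = 1 ∧
      ∀ s : G, s ≠ 1 → ψ (perm s) = 0 := by
  classical
  let L : (G →₀ ℂ) →ₗ[ℂ] BL Y := Finsupp.linearCombination ℂ (fun t : G => (perm t : BL Y))
  have hL : ∀ c, ‖c 1‖ ≤ ‖L c‖ := fun c => hle c
  obtain ⟨g, hgn, hgL⟩ := extend_along L (Finsupp.lapply 1) hL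
  have hLs : ∀ t : G, L (Finsupp.single t 1) = perm t := by
    intro t
    change Finsupp.linearCombination ℂ _ _ = _
    rw [Finsupp.linearCombination_single, one_smul]
  refine ⟨g, fun T => ?_, ?_, fun s hs => ?_⟩
  · refine (g.le_opNorm T).trans ?_
    exact mul_le_of_le_one_left (norm_nonneg _) hgn
  · have := hgL (Finsupp.single 1 1)
    rw [hLs, perm_one] at this
    simpa using this
  · have := hgL (Finsupp.single s 1)
    rw [hLs] at this
    simpa [hs] using this

theorem not_amen_rec {X : Type*} [TopologicalSpace X] [CompactSpace X] [T2Space X]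
    [MulAction G X] [ContinuousConstSMul G X] [Nonempty X] (hSP : SPr G X)
    (hst : ∀ (x : X) (H : Subgroup G), H ≤ MulAction.stabilizer G x → IsAmenable H)
    (hs : IsCstarSimple G) {H : Subgroup G} (ham : IsAmenable H) (hrec : IsRecurrent H) :
    False := by
  classical
  obtain ⟨t, w, ht1, htw⟩ := exists_int_fix hSP ham hrec
  obtain ⟨h, hw, h0, h1, hout⟩ := bump w htw
  obtain ⟨z⟩ := ‹Nonempty X›
  let S := MulAction.stabilizer G z
  let o : G ⧸ S → X := MulAction.ofQuotientStabilizer G z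
  have ho : ∀ (g : G) y, o (g • y) = g • o y := fun g y =>
    MulAction.ofQuotientStabilizer_smul G z g y
  have hoi : Function.Injective o := MulAction.injective_ofQuotientStabilizer G z
  obtain ⟨ψ, hψ, ψ1, ψ0⟩ := exists_trace_ext (G := G) (Y := G ⧸ S) fun c =>
    (coeff_one_le c).trans (simple_norm_le hs (quasi_norm_le (hst z S le_rfl)) c)
  obtain ⟨g, ψ', hψ', hP, hg⟩ := exists_push hSP o ho ψ hψ ψ1 h w hw (δ := 1/8) (by norm_num)
  have e1 : mulop o h * (perm t : BL (G ⧸ S)) = mulop o h := by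
    ext f y
    rw [ContinuousLinearMap.mul_apply, mulop_apply, mulop_apply, perm_apply]
    by_cases hy : t • o y = o y
    · have : t⁻¹ • y = y := by
        rw [inv_smul_eq_iff]
        apply hoi
        rw [ho, hy]
      rw [this]
    · rw [hout _ hy]; simp
  have e2 : ψ' (perm t) = 0 := by
    rw [hg, ← perm_mul, ← perm_mul]
    apply ψ0
    intro h
    apply ht1
    have : t = g * (g⁻¹ * t * g) * g⁻¹ := by group
    rw [this, h]; group
  have e3 : ψ' (mulop o h) = - ψ' (mulop o (1 - h) * perm t) := by
    have h6 : mulop o h + mulop o (1 - h) * (perm t : BL (G ⧸ S)) = perm t := by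
      have h7 : mulop o h + mulop o (1 - h) = (1 : BL (G ⧸ S)) := by
        rw [← mulop_add, add_sub_cancel, mulop_one]
      calc mulop o h + mulop o (1 - h) * (perm t : BL (G ⧸ S))
          = (mulop o h + mulop o (1 - h)) * (perm t : BL (G ⧸ S)) := by rw [add_mul, e1]
        _ = perm t := by rw [h7, one_mul]
    apply eq_neg_of_add_eq_zero_left
    rw [← map_add, h6, e2]
  have h3 := small_left o h h0 h1 ψ' hψ' (perm t) (perm_norm t) (by norm_num) hP
  have h4 : √(2 * (1 / 8) : ℝ) = 1 / 2 := by
    rw [show (2 * (1 / 8) : ℝ) = (1 / 2) ^ 2 by norm_num]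
    exact Real.sqrt_sq (by norm_num)
  rw [h4] at h3
  have h5 := (Complex.re_le_norm (ψ' (mulop o h)))
  rw [e3, norm_neg] at h5
  rw [e3] at hP
  linarith

end Final

/-- A discrete group is C*-simple if and only if it has no amenable recurrent subgroup that is
either finite normal or normalish. -/
theorem cstarSimple_iff_no_amenable_recurrent_finiteNormal_or_normalish
    (G : Type u) [Group G] :
    IsCstarSimple G ↔
      ¬ ∃ H : Subgroup G, IsAmenable H ∧ IsRecurrent H ∧
        (((H : Set G).Finite ∧ H.Normal) ∨ IsNormalish H) := by
  obtain ⟨X, i1, i2, i3, i4, i5, hne, hSP, hst⟩ := exists_boundary (G := G)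
  constructor
  · rintro hs ⟨H, ham, hrec, _⟩
    exact not_amen_rec hSP hst hs ham hrec
  · intro hno
    by_contra hns
    obtain ⟨F, hF1, hF⟩ := notsimple_F hSP hns
    exact hno (exists_sub_of_F hSP hst F hF1 hF)
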